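/- arXiv:1201.5403 — 2 statements merged into one kernel-verified Lean document; each statement's English description precedes it below -/
import Mathlib

section
/- Let A : ℝ → ℝ be a Lipschitz function with compact support and let Ω = {z ∈ ℂ : Im z > A(Re z)}, with frontier Γ = {x + i·A(x) : x ∈ ℝ}. Then for every w ∉ Γ and every ε with 0 < ε < dist(w, Γ): (2/π) ∫_{z ∈ Ω, |w−z| > ε} 1/(w − z)³ dm(z) = (i/(2π)) ∫_ℝ (1 − i·A'(x)) / (w − (x + i·A(x)))² dx. (This is the boundary-integral formula ∂B(χ_Ω)(w) = (i/2π) ∫_{∂Ω} (w − z)^{−2} d z̄, with ∂Ω parameterized by x ↦ x + i·A(x).) -/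
/-!
Let `h z = (w - z)⁻³` and let `γ x = x + i A x` parameterize the graph `Γ`.  Since
`∂/∂y (w - z)⁻² = 2 i (w - z)⁻³` for `z = x + i y`, integrating `h` along the vertical half-line
above `γ x` gives `(i / 2) (w - γ x)⁻²`, and along the one below it gives the opposite.

If `w` lies below `Γ`, the disc `|w - z| ≤ ε` misses `Ω`, so the truncation is void and Fubini gives
`∫_Ω h = (i / 2) ∫ (w - γ x)⁻² dx`.  If `w` lies above `Γ`, the disc is contained in `Ω`; as `h` is
odd around `w`, its integral over `|w - z| > ε` vanishes, so the truncated integral over `Ω` is minus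
the integral over the complement of `Ω`, and Fubini gives the same value
(`truncated_integral_eq`).

Finally `(1 + i A') (w - γ)⁻²` is almost everywhere the derivative of the Lipschitz function
`(w - γ)⁻¹`, which vanishes at `±∞`; so its integral is zero, and replacing `2` by
`2 - (1 + i A') = 1 - i A'` in the numerator does not change the integral.
-/

open MeasureTheory
open Filter Topology Set

/-- The integral over the line of the almost everywhere derivative of a Lipschitz function vanishing
at both ends is zero. -/
lemma integral_eq_zero_of_lipschitz_real {g g' : ℝ → ℝ} {C : NNReal} (hg : LipschitzWith C g)
    (hd : ∀ᵐ x, HasDerivAt g (g' x) x) (hi : Integrable g')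
    (h1 : Tendsto g atTop (𝓝 0)) (h2 : Tendsto g atBot (𝓝 0)) : ∫ x, g' x = 0 := by
  have key : ∀ R : ℝ, ∫ x in (-R)..R, g' x = g R - g (-R) := fun R => by
    rw [← (hg.lipschitzOnWith.absolutelyContinuousOnInterval).integral_deriv_eq_sub]
    apply intervalIntegral.integral_congr_ae
    filter_upwards [hd] with x hx _ using hx.deriv.symm
  have t1 := intervalIntegral_tendsto_integral hi tendsto_neg_atTop_atBot tendsto_id
  have t2 : Tendsto (fun R : ℝ => g R - g (-R)) atTop (𝓝 (0 - 0)) :=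
    h1.sub (h2.comp tendsto_neg_atTop_atBot)
  rw [sub_zero] at t2
  refine tendsto_nhds_unique t1 (t2.congr fun R => ?_)
  exact (key R).symm

lemma integral_eq_zero_of_lipschitz {g g' : ℝ → ℂ} {C : NNReal} (hg : LipschitzWith C g)
    (hd : ∀ᵐ x, HasDerivAt g (g' x) x) (hi : Integrable g')
    (h1 : Tendsto g atTop (𝓝 0)) (h2 : Tendsto g atBot (𝓝 0)) : ∫ x, g' x = 0 := by
  have key : ∀ L : ℂ →L[ℝ] ℝ, L (∫ x, g' x) = 0 := fun L => by
    rw [← L.integral_comp_comm hi]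
    refine integral_eq_zero_of_lipschitz_real (g := fun x => L (g x)) (L.lipschitz.comp hg) ?_
      (L.integrable_comp hi) ?_ ?_
    · filter_upwards [hd] with x hx using L.hasFDerivAt.comp_hasDerivAt x hx
    · simpa [Function.comp_def] using (L.continuous.tendsto 0).comp h1
    · simpa [Function.comp_def] using (L.continuous.tendsto 0).comp h2
  exact Complex.ext (key Complex.reCLM) (key Complex.imCLM)

lemma inv_norm_le {ε u : ℝ} {v : ℂ} (hε : 0 < ε) (h1 : ε ≤ ‖v‖) (hu : 0 ≤ u) (h2 : u ≤ ‖v‖) :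
    ‖v‖⁻¹ ≤ (1 + ε⁻¹) * (1 + u)⁻¹ := by
  have hv : 0 < ‖v‖ := hε.trans_le h1
  rw [← div_eq_mul_inv, le_div_iff₀ (by positivity), inv_mul_le_iff₀ hv]
  have : 1 ≤ ‖v‖ * ε⁻¹ := by rwa [← div_eq_mul_inv, one_le_div hε]
  nlinarith

lemma integrableOn_kernel (w : ℂ) {ε : ℝ} (hε : 0 < ε) :
    IntegrableOn (fun z : ℂ => 1 / (w - z) ^ 3) {z | ε < ‖w - z‖} := by
  have h0 : Integrable (fun v : ℂ => (1 + ‖v‖) ^ (-(3 : ℝ))) :=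
    integrable_one_add_norm (by rw [Complex.finrank_real_complex]; norm_num)
  have h1 := ((h0.comp_sub_left w).const_mul ((1 + ε⁻¹) ^ 3)).integrableOn (s := {z | ε < ‖w - z‖})
  refine Integrable.mono' h1 (Measurable.aestronglyMeasurable (by fun_prop)) ?_
  refine (ae_restrict_mem (measurableSet_lt (by fun_prop) (by fun_prop))).mono fun z hz => ?_
  have hz' : ε < ‖w - z‖ := hz
  have := inv_norm_le hε hz'.le (norm_nonneg (w - z)) le_rfl
  have h3 := pow_le_pow_left₀ (by positivity) this 3
  rw [mul_pow] at h3
  rw [norm_div, norm_one, norm_pow, one_div, ← inv_pow,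
    Real.rpow_neg (by positivity), show (3 : ℝ) = (3 : ℕ) by norm_num, Real.rpow_natCast, ← inv_pow]
  exact h3

/-- The kernel is odd around `w`, so its truncated integral over the whole plane vanishes. -/
lemma integral_kernel_eq_zero (w : ℂ) (ε : ℝ) :
    ∫ z in {z : ℂ | ε < ‖w - z‖}, 1 / (w - z) ^ 3 = 0 := by
  have hm : MeasurableSet {z : ℂ | ε < ‖w - z‖} := measurableSet_lt (by fun_prop) (by fun_prop)
  rw [← integral_indicator hm]
  set f : ℂ → ℂ := indicator {v : ℂ | ε < ‖v‖} (fun v => 1 / v ^ 3) with hf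
  have e1 : indicator {z : ℂ | ε < ‖w - z‖} (fun z => 1 / (w - z) ^ 3) = fun z => f (w - z) := by
    ext z; simp [hf, indicator]
  rw [e1, integral_sub_left_eq_self f volume w]
  have e2 : ∫ v, f (-v) = ∫ v, f v := integral_neg_eq_self f volume
  have e3 : ∀ v, f (-v) = - f v := fun v => by
    simp only [hf, indicator, mem_ofPred_eq, norm_neg]
    split_ifs
    · rw [Odd.neg_pow (by decide), div_neg]
    · simp
  simp only [e3, integral_neg] at e2
  exact self_eq_neg.1 e2.symm

/-- Fubini over a plane set, sliced by vertical lines; almost every slice is integrable. -/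
lemma fubini_vertical {S : Set ℂ} (hS : MeasurableSet S) {h : ℂ → ℂ} (hi : IntegrableOn h S) :
    (∫ z in S, h z = ∫ x : ℝ, ∫ y in {y : ℝ | (⟨x, y⟩ : ℂ) ∈ S}, h ⟨x, y⟩) ∧
      ∀ᵐ x : ℝ, IntegrableOn (fun y : ℝ => h ⟨x, y⟩) {y : ℝ | (⟨x, y⟩ : ℂ) ∈ S} := by
  have mp := Complex.volume_preserving_equiv_real_prod.symm
  have me := Complex.measurableEquivRealProd.symm.measurableEmbedding
  have mk : ∀ x : ℝ, Measurable (fun y : ℝ => (⟨x, y⟩ : ℂ)) := fun x =>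
    Complex.measurableEquivRealProd.symm.measurable.comp measurable_prodMk_left
  have hSx : ∀ x : ℝ, MeasurableSet {y : ℝ | (⟨x, y⟩ : ℂ) ∈ S} := fun x => mk x hS
  have hi' : Integrable (S.indicator h) := (integrable_indicator_iff hS).2 hi
  have hp : Integrable (fun p : ℝ × ℝ => S.indicator h ⟨p.1, p.2⟩) (volume.prod volume) :=
    (mp.integrable_comp_emb me).2 hi'
  have ind : ∀ x : ℝ, (fun y : ℝ => S.indicator h ⟨x, y⟩)
      = indicator {y : ℝ | (⟨x, y⟩ : ℂ) ∈ S} (fun y => h ⟨x, y⟩) := fun x => by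
    ext y; simp [indicator]
  constructor
  · rw [← integral_indicator hS, ← mp.integral_comp me]
    refine (integral_prod _ hp).trans ?_
    congr 1; ext x
    rw [← integral_indicator (hSx x), ← ind]
  · filter_upwards [hp.prod_right_ae] with x hx
    rw [← integrable_indicator_iff (hSx x), ← ind]
    exact hx

lemma hasDerivAt_vertical {w : ℂ} {x y : ℝ} (h : w - ⟨x, y⟩ ≠ 0) :
    HasDerivAt (fun y : ℝ => -(Complex.I / 2) * (1 / (w - ⟨x, y⟩) ^ 2))
      (1 / (w - ⟨x, y⟩) ^ 3) y := by
  have e : ∀ y : ℝ, (⟨x, y⟩ : ℂ) = x + y * Complex.I := fun y => Complex.mk_eq_add_mul_I x y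
  simp only [e] at h ⊢
  have h1 : HasDerivAt (fun y : ℝ => w - ((x : ℂ) + y * Complex.I)) (-Complex.I) y := by
    have := (((Complex.ofRealCLM.hasDerivAt (x := y)).mul_const Complex.I).const_add
      (x : ℂ)).const_sub w
    simpa using this
  have h2 := ((h1.pow 2).inv (pow_ne_zero 2 h)).const_mul (-(Complex.I / 2))
  have e2 : (fun y : ℝ => -(Complex.I / 2) * (1 / (w - (x + y * Complex.I)) ^ 2)) =
      fun y : ℝ => -(Complex.I / 2) * ((fun y : ℝ => w - (x + y * Complex.I)) ^ 2)⁻¹ y := by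
    ext y; simp
  rw [e2]
  refine h2.congr_deriv ?_
  simp only [Pi.pow_apply]
  generalize w - (x + y * Complex.I) = v at h
  push_cast
  field_simp
  simp

lemma tendsto_vertical (w : ℂ) (x : ℝ) :
    Tendsto (fun y : ℝ => -(Complex.I / 2) * (1 / (w - ⟨x, y⟩) ^ 2)) (cocompact ℝ) (𝓝 0) := by
  have h1 : Tendsto (fun y : ℝ => w - ⟨x, y⟩) (cocompact ℝ) (Bornology.cobounded ℂ) := by
    rw [← tendsto_norm_atTop_iff_cobounded]
    have : Tendsto (fun y : ℝ => ‖w.im - y‖) (cocompact ℝ) atTop :=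
      tendsto_norm_cocompact_atTop.comp (Homeomorph.subLeft w.im).isClosedEmbedding.tendsto_cocompact
    refine tendsto_atTop_mono (fun y => ?_) this
    simpa using Complex.abs_im_le_norm (w - ⟨x, y⟩)
  have h2 := (((tendsto_inv₀_cobounded (α := ℂ)).comp h1).pow 2).const_mul (-(Complex.I / 2))
  simpa [Function.comp_def] using h2

/-- If the closed disc misses the graph, it lies entirely on one side of it. -/
lemma same_side {A : ℝ → ℝ} (hA : Continuous A) {w z : ℂ} {ε : ℝ} (hε : 0 < ε)
    (hfar : ∀ ζ : ℂ, ζ.im = A ζ.re → ε < ‖w - ζ‖) (hz : ‖w - z‖ ≤ ε) :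
    A z.re < z.im ↔ A w.re < w.im := by
  have hc : IsPreconnected (Metric.closedBall w ε) := (convex_closedBall w ε).isPreconnected
  have hw : w ∈ Metric.closedBall w ε := Metric.mem_closedBall_self hε.le
  have hz' : z ∈ Metric.closedBall w ε := by
    rwa [Metric.mem_closedBall, dist_comm, dist_eq_norm]
  have c1 : ContinuousOn (fun z : ℂ => z.im) (Metric.closedBall w ε) := by fun_prop
  have c2 : ContinuousOn (fun z : ℂ => A z.re) (Metric.closedBall w ε) := by fun_prop
  have no : ∀ c ∈ Metric.closedBall w ε, c.im ≠ A c.re := fun c hc h => by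
    rw [Metric.mem_closedBall, dist_comm, dist_eq_norm] at hc
    exact (hfar c h).not_ge hc
  constructor
  · intro h
    by_contra! h'
    obtain ⟨c, hc, e⟩ := hc.intermediate_value₂ hw hz' c1 c2 h' h.le
    exact no c hc e
  · intro h
    by_contra! h'
    obtain ⟨c, hc, e⟩ := hc.intermediate_value₂ hz' hw c1 c2 h' h.le
    exact no c hc e

/-- The truncated area integral, as an integral over the graph with respect to `dx`. -/
lemma truncated_integral_eq {A : ℝ → ℝ} (hA : Continuous A) {w : ℂ} {ε : ℝ} (hε : 0 < ε)
    (hfar : ∀ ζ : ℂ, ζ.im = A ζ.re → ε < ‖w - ζ‖) :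
    ∫ z in {z : ℂ | A z.re < z.im ∧ ε < ‖w - z‖}, 1 / (w - z) ^ 3 =
      ∫ x : ℝ, Complex.I / 2 * (1 / (w - ⟨x, A x⟩) ^ 2) := by
  have hE := integrableOn_kernel w hε
  have mS : MeasurableSet {z : ℂ | A z.re < z.im} := measurableSet_lt (by fun_prop) (by fun_prop)
  have mT : MeasurableSet {z : ℂ | z.im ≤ A z.re} := measurableSet_le (by fun_prop) (by fun_prop)
  have mE : MeasurableSet {z : ℂ | ε < ‖w - z‖} := measurableSet_lt (by fun_prop) (by fun_prop)
  have ne : ∀ z : ℂ, ε < ‖w - z‖ → w - z ≠ 0 := fun z h => norm_pos_iff.1 (hε.trans h)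
  by_cases hw : A w.re < w.im
  · have sub : {z : ℂ | z.im ≤ A z.re} ⊆ {z : ℂ | ε < ‖w - z‖} := fun z hz => by
      by_contra! h
      have hz' : z.im ≤ A z.re := hz
      exact hz'.not_gt ((same_side hA hε hfar (not_lt.1 h)).2 hw)
    have un : {z : ℂ | ε < ‖w - z‖}
        = {z : ℂ | A z.re < z.im ∧ ε < ‖w - z‖} ∪ {z : ℂ | z.im ≤ A z.re} := by
      ext z
      constructor
      · intro h
        rcases lt_or_ge (A z.re) z.im with h' | h'
        exacts [Or.inl ⟨h', h⟩, Or.inr h']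
      · rintro (h | h)
        exacts [h.2, sub h]
    have dj : Disjoint {z : ℂ | A z.re < z.im ∧ ε < ‖w - z‖} {z : ℂ | z.im ≤ A z.re} :=
      Set.disjoint_left.2 fun z h h' => (not_lt.2 h') h.1
    have z0 := integral_kernel_eq_zero w ε
    rw [un, setIntegral_union dj mT (hE.mono_set fun z h => h.2) (hE.mono_set sub)] at z0
    rw [eq_neg_of_add_eq_zero_left z0]
    obtain ⟨f1, f2⟩ := fubini_vertical mT (hE.mono_set sub)
    rw [f1, ← integral_neg]
    refine integral_congr_ae ?_
    filter_upwards [f2] with x hx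
    have := integral_Iic_of_hasDerivAt_of_tendsto' (a := A x)
      (fun y hy => hasDerivAt_vertical (ne ⟨x, y⟩ (sub hy))) hx
      ((tendsto_vertical w x).mono_left atBot_le_cocompact)
    change -(∫ y in Iic (A x), 1 / (w - ⟨x, y⟩) ^ 3) = _
    rw [this]; ring
  · have sub : {z : ℂ | A z.re < z.im} ⊆ {z : ℂ | ε < ‖w - z‖} := fun z hz => by
      by_contra! h
      exact hw ((same_side hA hε hfar (not_lt.1 h)).1 hz)
    have e : {z : ℂ | A z.re < z.im ∧ ε < ‖w - z‖} = {z : ℂ | A z.re < z.im} := by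
      ext z; exact ⟨fun h => h.1, fun h => ⟨h, sub h⟩⟩
    rw [e]
    obtain ⟨f1, f2⟩ := fubini_vertical mS (hE.mono_set sub)
    rw [f1]
    refine integral_congr_ae ?_
    filter_upwards [f2] with x hx
    have := integral_Ioi_of_hasDerivAt_of_tendsto' (a := A x)
      (fun y hy => hasDerivAt_vertical (ne ⟨x, y⟩ ?_)) hx
      ((tendsto_vertical w x).mono_left atTop_le_cocompact)
    · change (∫ y in Ioi (A x), 1 / (w - ⟨x, y⟩) ^ 3) = _
      rw [this]; ring
    · rcases (show A x ≤ y from hy).eq_or_lt with h | h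
      exacts [hfar _ h.symm, sub h]

lemma integrable_graph_kernel {A : ℝ → ℝ} (hA : Continuous A) {w : ℂ} {ε : ℝ} (hε : 0 < ε)
    (hfar : ∀ ζ : ℂ, ζ.im = A ζ.re → ε < ‖w - ζ‖) :
    Integrable (fun x : ℝ => 1 / (w - (x + A x * Complex.I)) ^ 2) := by
  have h0 : Integrable (fun v : ℝ => (1 + ‖v‖) ^ (-(2 : ℝ))) :=
    integrable_one_add_norm (by rw [Module.finrank_self]; norm_num)
  have h1 := (h0.comp_sub_left w.re).const_mul ((1 + ε⁻¹) ^ 2)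
  refine Integrable.mono' h1 (Measurable.aestronglyMeasurable ?_) (.of_forall fun x => ?_)
  · have := hA.measurable
    fun_prop
  have hf := hfar (x + A x * Complex.I) (by simp)
  have hr : ‖w.re - x‖ ≤ ‖w - (x + A x * Complex.I)‖ := by
    simpa using Complex.abs_re_le_norm (w - (x + A x * Complex.I))
  have h3 := pow_le_pow_left₀ (by positivity) (inv_norm_le hε hf.le (norm_nonneg _) hr) 2
  rw [mul_pow] at h3
  rw [norm_div, norm_one, norm_pow, one_div, ← inv_pow,
    Real.rpow_neg (by positivity), show (2 : ℝ) = (2 : ℕ) by norm_num, Real.rpow_natCast, ← inv_pow]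
  exact h3

/-- `(1 + i A') (w - γ)⁻²` is the almost everywhere derivative of `(w - γ)⁻¹`, where
`γ x = x + i A x`; it is integrable and has integral zero. -/
lemma exact_part {A : ℝ → ℝ} {K : NNReal} (hA : LipschitzWith K A) {w : ℂ} {ε : ℝ} (hε : 0 < ε)
    (hfar : ∀ ζ : ℂ, ζ.im = A ζ.re → ε < ‖w - ζ‖) :
    Integrable (fun x : ℝ => (1 + Complex.I * ((deriv A x : ℝ) : ℂ)) *
      (1 / (w - (x + A x * Complex.I)) ^ 2)) ∧
    ∫ x : ℝ, (1 + Complex.I * ((deriv A x : ℝ) : ℂ)) * (1 / (w - (x + A x * Complex.I)) ^ 2) = 0 := by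
  have hγ : ∀ x : ℝ, ε < ‖w - (x + A x * Complex.I)‖ := fun x => hfar _ (by simp)
  have ne : ∀ x : ℝ, w - (x + A x * Complex.I) ≠ 0 := fun x => norm_pos_iff.1 (hε.trans (hγ x))
  have hint : Integrable (fun x : ℝ => (1 + Complex.I * ((deriv A x : ℝ) : ℂ)) *
      (1 / (w - (x + A x * Complex.I)) ^ 2)) := by
    refine (integrable_graph_kernel hA.continuous hε hfar).bdd_mul (c := 1 + K) ?_
      (.of_forall fun x => ?_)
    · have := measurable_deriv A
      exact Measurable.aestronglyMeasurable (by fun_prop)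
    · refine (norm_add_le _ _).trans ?_
      simpa using norm_deriv_le_of_lipschitz (x₀ := x) hA
  have hlim : Tendsto (fun x : ℝ => (w - (x + A x * Complex.I))⁻¹) (cocompact ℝ) (𝓝 0) := by
    refine (tendsto_inv₀_cobounded (α := ℂ)).comp ?_
    rw [← tendsto_norm_atTop_iff_cobounded]
    have : Tendsto (fun x : ℝ => ‖w.re - x‖) (cocompact ℝ) atTop :=
      tendsto_norm_cocompact_atTop.comp (Homeomorph.subLeft w.re).isClosedEmbedding.tendsto_cocompact
    refine tendsto_atTop_mono (fun x => ?_) this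
    simpa using Complex.abs_re_le_norm (w - (x + A x * Complex.I))
  refine ⟨hint, integral_eq_zero_of_lipschitz (g := fun x : ℝ => (w - (x + A x * Complex.I))⁻¹)
    (C := Real.toNNReal ((1 + K) / ε ^ 2)) ?_ ?_ hint (hlim.mono_left atTop_le_cocompact)
    (hlim.mono_left atBot_le_cocompact)⟩
  · refine LipschitzWith.of_dist_le_mul fun x y => ?_
    rw [dist_eq_norm, inv_sub_inv (ne x) (ne y), norm_div, norm_mul, Real.coe_toNNReal _ (by positivity)]
    have e : w - (y + A y * Complex.I) - (w - (x + A x * Complex.I))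
        = ((x - y : ℝ) : ℂ) + ((A x - A y : ℝ) : ℂ) * Complex.I := by push_cast; ring
    have h1 : ‖w - (y + A y * Complex.I) - (w - (x + A x * Complex.I))‖ ≤ (1 + K) * dist x y := by
      rw [e]
      refine (norm_add_le _ _).trans ?_
      rw [norm_mul, Complex.norm_I, mul_one, Complex.norm_real, Complex.norm_real, ← dist_eq_norm,
        ← dist_eq_norm]
      linarith [hA.dist_le_mul x y]
    have h2 : ε ^ 2 ≤ ‖w - (x + A x * Complex.I)‖ * ‖w - (y + A y * Complex.I)‖ := by
      rw [sq]; exact mul_le_mul (hγ x).le (hγ y).le hε.le (norm_nonneg _)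
    rw [div_mul_eq_mul_div]
    exact div_le_div₀ (by positivity) h1 (by positivity) h2
  · filter_upwards [hA.ae_differentiableAt_real] with x hx
    have d1 : HasDerivAt (fun x : ℝ => w - ((x : ℂ) + A x * Complex.I))
        (-(1 + deriv A x * Complex.I)) x :=
      ((Complex.ofRealCLM.hasDerivAt (x := x)).add
        ((hx.hasDerivAt.ofReal_comp).mul_const Complex.I)).const_sub w
    exact (d1.fun_inv (ne x)).congr_deriv (by ring)



theorem statement8 (A : ℝ → ℝ) (K : NNReal) (hA : LipschitzWith K A)
    (hsupp : HasCompactSupport A) (w : ℂ) (hw : w ∉ {ζ : ℂ | ζ.im = A ζ.re})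
    (ε : ℝ) (hε : 0 < ε) (hεd : ε < Metric.infDist w {ζ : ℂ | ζ.im = A ζ.re}) :
    (2 / (Real.pi : ℂ)) *
        (∫ z in {z : ℂ | A z.re < z.im ∧ ε < ‖w - z‖}, 1 / (w - z) ^ 3) =
      (Complex.I / (2 * (Real.pi : ℂ))) *
        ∫ x : ℝ, (1 - Complex.I * Complex.ofReal (deriv A x)) /
          (w - (Complex.ofReal x + Complex.ofReal (A x) * Complex.I)) ^ 2 := by
  have hfar : ∀ ζ : ℂ, ζ.im = A ζ.re → ε < ‖w - ζ‖ := fun ζ hζ => by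
    rw [← dist_eq_norm]
    exact hεd.trans_le (Metric.infDist_le_dist_of_mem hζ)
  obtain ⟨i1, z1⟩ := exact_part hA hε hfar
  have i0 := integrable_graph_kernel hA.continuous hε hfar
  have e : ∫ x : ℝ, (1 - Complex.I * Complex.ofReal (deriv A x)) /
      (w - (Complex.ofReal x + Complex.ofReal (A x) * Complex.I)) ^ 2
      = 2 * ∫ x : ℝ, 1 / (w - (x + A x * Complex.I)) ^ 2 := by
    rw [← integral_const_mul, ← sub_zero (∫ x : ℝ, 2 * _), ← z1, ← integral_sub (i0.const_mul 2) i1]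
    congr 1; ext x; ring
  rw [e, truncated_integral_eq hA.continuous hε hfar, integral_const_mul]
  simp only [Complex.mk_eq_add_mul_I]
  ring
end

section
/- Let 1 < p < ∞. There is a constant C, depending only on p, such that for every t > 0 and every Lipschitz function A : ℝ → ℝ with compact support: ( ∫_ℝ |(φ_t * A)(x)|^p dx )^{1/p} ≤ C ( ∫_ℝ |(ψ_t * A)(x)|^p dx )^{1/p}, where ψ_t(u) = t³(3u² − t²)/(u² + t²)³ and φ_t(u) = 2t²u(u² − 3t²)/(u² + t²)³. -/
/-!
Put `F z = 2 t² ∫ A y / (z - y)³ dy`, a holomorphic function on the open upper half plane. Since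
`2 t² / (u + i t)³ = φ_t u - 2 i ψ_t u`, on the line `Im z = t` one has `Re F = φ_t * A` and
`Im F = -2 (ψ_t * A)`. The theorem is therefore M. Riesz's inequality
`∫ |Re F|^p ≤ C ∫ |Im F|^p` for holomorphic functions on a half plane which decay together with
their first two derivatives.

For `1 < p ≤ 2` (`riesz_small`), let `k q = (q + e)^(p/2) - e^(p/2)`, which for small `e > 0` is a
smooth substitute for `q^(p/2)`. The function `k (|F|²) - 2/(p-1) * k ((Im F)²)` is superharmonic
(`G2_laplace`): its Laplacian is `|F'|²` times an expression that is `≤ 0` because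
`k'` is antitone and `k'' ≤ 0` is controlled by `k'`. The integral of a decaying
superharmonic function over the horizontal line at height `s` is concave in `s` and tends to `0` at
infinity, hence is nonpositive (`integral_nonpos_of_superharmonic`). Letting `e → 0` gives the
inequality with constant `2/(p-1)`.

For larger `p` the exponent is doubled (`riesz_double`): the bound with exponent `p` for
`F² = (u² - v²) + 2 i u v` controls `∫ |u² - v²|^p` by `∫ |2 u v|^p`, and Young's inequality lets the
part involving `u` be absorbed on the left.
-/

open MeasureTheory

/-! ### Superharmonic functions on a half plane -/

open Filter Topology in
/-- A superharmonic function `g` on `{s > a}` that decays with its derivatives has nonpositive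
integrals over horizontal lines. The integral `I s = ∫ g x s dx` satisfies
`I'' = ∫ gss ≤ -∫ gxx = 0`, so `I'` is antitone; as `I'` tends to `0` at infinity it is nonnegative,
so `I` is monotone, and `I` tends to `0` as well. -/
theorem integral_nonpos_of_superharmonic {a M t : ℝ} (ht : a < t)
    {g gs gss gx gxx : ℝ → ℝ → ℝ}
    (hs : ∀ x s, a < s → HasDerivAt (fun σ => g x σ) (gs x s) s)
    (hss : ∀ x s, a < s → HasDerivAt (fun σ => gs x σ) (gss x s) s)
    (hx : ∀ x s, a < s → HasDerivAt (fun ξ => g ξ s) (gx x s) x)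
    (hxx : ∀ x s, a < s → HasDerivAt (fun ξ => gx ξ s) (gxx x s) x)
    (cs : ∀ s, a < s → Continuous fun x => gs x s)
    (css : ∀ s, a < s → Continuous fun x => gss x s)
    (cxx : ∀ s, a < s → Continuous fun x => gxx x s)
    (bg : ∀ x s, a < s → |g x s| ≤ M / (1 + s ^ 2) * (1 + x ^ 2)⁻¹)
    (bs : ∀ x s, a < s → |gs x s| ≤ M / (1 + s ^ 2) * (1 + x ^ 2)⁻¹)
    (bss : ∀ x s, a < s → |gss x s| ≤ M / (1 + s ^ 2) * (1 + x ^ 2)⁻¹)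
    (bx : ∀ x s, a < s → |gx x s| ≤ M / (1 + s ^ 2) * (1 + x ^ 2)⁻¹)
    (bxx : ∀ x s, a < s → |gxx x s| ≤ M / (1 + s ^ 2) * (1 + x ^ 2)⁻¹)
    (hsuper : ∀ x s, a < s → gss x s + gxx x s ≤ 0) :
    ∫ x, g x t ≤ 0 := by
  have hM : 0 ≤ M := by
    have h := (abs_nonneg _).trans (bg 0 t ht)
    have h2 : 0 < 1 + t ^ 2 := by positivity
    simp only [ne_eq, OfNat.ofNat_ne_zero, not_false_eq_true, zero_pow, add_zero, inv_one,
      mul_one] at h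
    by_contra hneg
    exact absurd (div_neg_of_neg_of_pos (not_le.mp hneg) h2) (not_lt.mpr h)
  have cg : ∀ s, a < s → Continuous fun x => g x s := fun s h =>
    continuous_iff_continuousAt.mpr fun x => (hx x s h).continuousAt
  have cgx : ∀ s, a < s → Continuous fun x => gx x s := fun s h =>
    continuous_iff_continuousAt.mpr fun x => (hxx x s h).continuousAt
  have intw : ∀ N : ℝ, Integrable fun x : ℝ => N * (1 + x ^ 2)⁻¹ := fun N =>
    integrable_inv_one_add_sq.const_mul N
  have int_of : ∀ f : ℝ → ℝ → ℝ, (∀ s, a < s → Continuous fun x => f x s) →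
      (∀ x s, a < s → |f x s| ≤ M / (1 + s ^ 2) * (1 + x ^ 2)⁻¹) →
      ∀ s, a < s → Integrable fun x => f x s := fun f hc hb s h =>
    (intw (M / (1 + s ^ 2))).mono' (hc s h).aestronglyMeasurable
      (Eventually.of_forall fun x => hb x s h)
  have weak : ∀ f : ℝ → ℝ → ℝ,
      (∀ x s, a < s → |f x s| ≤ M / (1 + s ^ 2) * (1 + x ^ 2)⁻¹) →
      ∀ x s, a < s → ‖f x s‖ ≤ M * (1 + x ^ 2)⁻¹ := fun f hb x s h => by
    refine (hb x s h).trans ?_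
    gcongr
    exact div_le_self hM (by nlinarith [sq_nonneg s])
  have diff : ∀ f f' : ℝ → ℝ → ℝ, (∀ s, a < s → Continuous fun x => f x s) →
      (∀ s, a < s → Continuous fun x => f' x s) →
      (∀ x s, a < s → |f x s| ≤ M / (1 + s ^ 2) * (1 + x ^ 2)⁻¹) →
      (∀ x s, a < s → |f' x s| ≤ M / (1 + s ^ 2) * (1 + x ^ 2)⁻¹) →
      (∀ x s, a < s → HasDerivAt (fun σ => f x σ) (f' x s) s) →
      ∀ s, a < s → HasDerivAt (fun σ => ∫ x, f x σ) (∫ x, f' x s) s := by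
    intro f f' cf cf' bf bf' hd s h
    refine (hasDerivAt_integral_of_dominated_loc_of_deriv_le (F := fun σ x => f x σ)
      (F' := fun σ x => f' x σ) (bound := fun x => M * (1 + x ^ 2)⁻¹) (s := Set.Ioi a)
      (Ioi_mem_nhds h) ?_ (int_of f cf bf s h) (cf' s h).aestronglyMeasurable ?_ (intw M) ?_).2
    · filter_upwards [Ioi_mem_nhds h] with σ hσ using (cf σ hσ).aestronglyMeasurable
    · exact Eventually.of_forall fun x σ hσ => weak f' bf' x σ hσ
    · exact Eventually.of_forall fun x σ hσ => hd x σ hσ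
  have lim : ∀ f : ℝ → ℝ → ℝ,
      (∀ x s, a < s → |f x s| ≤ M / (1 + s ^ 2) * (1 + x ^ 2)⁻¹) →
      Tendsto (fun s => ∫ x, f x s) atTop (𝓝 0) := by
    intro f hb
    have h1 : Tendsto (fun s : ℝ => M / (1 + s ^ 2) * ∫ x : ℝ, (1 + x ^ 2)⁻¹) atTop (𝓝 0) := by
      rw [← zero_mul (∫ x : ℝ, (1 + x ^ 2)⁻¹)]
      refine Tendsto.mul_const _ (Tendsto.div_atTop tendsto_const_nhds ?_)
      exact tendsto_atTop_add_const_left _ _ (tendsto_pow_atTop two_ne_zero)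
    refine squeeze_zero_norm' ?_ h1
    filter_upwards [Ioi_mem_atTop a] with s h
    rw [← integral_const_mul]
    exact norm_integral_le_of_norm_le (intw _) (Eventually.of_forall fun x => hb x s h)
  have dI := diff g gs cg cs bg bs hs
  have dJ := diff gs gss cs css bs bss hss
  have hJ' : ∀ s, a < s → ∫ x, gss x s ≤ 0 := by
    intro s h
    have h0 : ∫ x, gxx x s = 0 :=
      integral_eq_zero_of_hasDerivAt_of_integrable (fun x => hxx x s h)
        (int_of gxx cxx bxx s h) (int_of gx cgx bx s h)
    have h1 : ∫ x, (gss x s + gxx x s) ≤ 0 :=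
      integral_nonpos fun x => hsuper x s h
    rw [integral_add (int_of gss css bss s h) (int_of gxx cxx bxx s h), h0] at h1
    linarith
  have antiJ : AntitoneOn (fun s => ∫ x, gs x s) (Set.Ioi a) := by
    refine antitoneOn_of_deriv_nonpos (convex_Ioi a)
      (fun s h => (dJ s h).continuousAt.continuousWithinAt) ?_ ?_
    · rw [interior_Ioi]
      exact fun s h => (dJ s h).differentiableAt.differentiableWithinAt
    · rw [interior_Ioi]
      exact fun s h => (dJ s h).deriv ▸ hJ' s h
  have Jnn : ∀ s, a < s → 0 ≤ ∫ x, gs x s := by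
    intro s h
    refine le_of_tendsto (lim gs bs) ?_
    filter_upwards [Ici_mem_atTop s] with σ hσ
    exact antiJ h (lt_of_lt_of_le h hσ) hσ
  have monoI : MonotoneOn (fun s => ∫ x, g x s) (Set.Ioi a) := by
    refine monotoneOn_of_deriv_nonneg (convex_Ioi a)
      (fun s h => (dI s h).continuousAt.continuousWithinAt) ?_ ?_
    · rw [interior_Ioi]
      exact fun s h => (dI s h).differentiableAt.differentiableWithinAt
    · rw [interior_Ioi]
      exact fun s h => (dI s h).deriv ▸ Jnn s h
  refine ge_of_tendsto (lim g bg) ?_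
  filter_upwards [Ici_mem_atTop t] with σ hσ
  exact monoI ht (lt_of_lt_of_le ht hσ) hσ

/-! ### Regularized powers -/

/-- The properties of a regularized power `k q ≈ q ^ r` on `[0, ∞)` used below; `k1`, `k2` are its
first two derivatives and `K` is a common bound for them. -/
structure Profile (r K : ℝ) (k k1 k2 : ℝ → ℝ) : Prop where
  deriv1 : ∀ q, 0 ≤ q → HasDerivAt k (k1 q) q
  deriv2 : ∀ q, 0 ≤ q → HasDerivAt k1 (k2 q) q
  cont2 : ∀ q, 0 ≤ q → ContinuousAt k2 q
  zero : k 0 = 0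
  nonneg1 : ∀ q, 0 ≤ q → 0 ≤ k1 q
  le1 : ∀ q, 0 ≤ q → k1 q ≤ K
  anti1 : ∀ q q', 0 ≤ q → q ≤ q' → k1 q' ≤ k1 q
  nonpos2 : ∀ q, 0 ≤ q → k2 q ≤ 0
  bound2 : ∀ q, 0 ≤ q → |k2 q| ≤ K
  elliptic : ∀ q, 0 ≤ q → (r - 1) * k1 q ≤ q * k2 q

/-- The last property holds because `q ≤ q + e` and the second derivative is nonpositive. -/
theorem exists_profile {r e : ℝ} (hr : 0 < r) (hr1 : r ≤ 1) (he : 0 < e) :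
    ∃ K, Profile r K (fun q => (q + e) ^ r - e ^ r) (fun q => r * (q + e) ^ (r - 1))
      (fun q => r * ((r - 1) * (q + e) ^ (r - 2))) := by
  have key1 : ∀ q q', 0 ≤ q → q ≤ q' → (q' + e) ^ (r - 1) ≤ (q + e) ^ (r - 1) :=
    fun q q' h h' => Real.rpow_le_rpow_of_nonpos (by linarith) (by linarith) (by linarith)
  have key2 : ∀ q, 0 ≤ q → (q + e) ^ (r - 2) ≤ e ^ (r - 2) := fun q h =>
    Real.rpow_le_rpow_of_nonpos he (by linarith) (by linarith)
  have key0 : ∀ q, 0 ≤ q → (q + e) ^ (r - 1) ≤ e ^ (r - 1) := fun q h =>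
    Real.rpow_le_rpow_of_nonpos he (by linarith) (by linarith)
  have p1 : 0 < e ^ (r - 1) := Real.rpow_pos_of_pos he _
  have p2 : 0 < e ^ (r - 2) := Real.rpow_pos_of_pos he _
  refine ⟨r * e ^ (r - 1) + r * ((1 - r) * e ^ (r - 2)), ?_, ?_, ?_, ?_, ?_, ?_, ?_, ?_, ?_, ?_⟩
  · intro q hq
    have := (((hasDerivAt_id q).add_const e).rpow_const (p := r)
      (Or.inl (by simp only [id]; linarith : (id q + e) ≠ 0 ))).sub_const (e ^ r)
    exact this.congr_deriv (by simp)
  · intro q hq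
    have := (((hasDerivAt_id q).add_const e).rpow_const (p := r - 1)
      (Or.inl (by simp only [id]; linarith : (id q + e) ≠ 0 ))).const_mul r
    refine this.congr_deriv ?_
    rw [show r - 1 - 1 = r - 2 by ring, one_mul, id]
  · intro q hq
    refine ContinuousAt.mul continuousAt_const (ContinuousAt.mul continuousAt_const ?_)
    exact ContinuousAt.rpow_const (by fun_prop) (Or.inl (by linarith))
  · simp
  · intro q hq
    have := Real.rpow_nonneg (by linarith : 0 ≤ q + e) (r - 1)
    positivity
  · intro q hq
    have h1 := mul_le_mul_of_nonneg_left (key0 q hq) hr.le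
    have h2 : 0 ≤ r * ((1 - r) * e ^ (r - 2)) :=
      mul_nonneg hr.le (mul_nonneg (by linarith) p2.le)
    linarith
  · exact fun q q' h h' => mul_le_mul_of_nonneg_left (key1 q q' h h') hr.le
  · intro q hq
    have := Real.rpow_nonneg (by linarith : 0 ≤ q + e) (r - 2)
    exact mul_nonpos_of_nonneg_of_nonpos hr.le
      (mul_nonpos_of_nonpos_of_nonneg (by linarith) this)
  · intro q hq
    have h0 := Real.rpow_nonneg (by linarith : 0 ≤ q + e) (r - 2)
    rw [abs_mul, abs_mul, abs_of_pos hr, abs_of_nonpos (by linarith : r - 1 ≤ 0),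
      abs_of_nonneg h0]
    have h1 : r * ((1 - r) * (q + e) ^ (r - 2)) ≤ r * ((1 - r) * e ^ (r - 2)) :=
      mul_le_mul_of_nonneg_left
        (mul_le_mul_of_nonneg_left (key2 q hq) (by linarith)) hr.le
    have h2 : 0 < r * e ^ (r - 1) := by positivity
    rw [neg_sub]
    linarith
  · intro q hq
    have h0 := Real.rpow_nonneg (by linarith : 0 ≤ q + e) (r - 2)
    have h1 : (q + e) ^ (r - 1) = (q + e) * (q + e) ^ (r - 2) := by
      rw [show r - 1 = 1 + (r - 2) by ring, Real.rpow_add (by linarith), Real.rpow_one]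
    rw [h1]
    have : 0 ≤ e * (r * ((1 - r) * (q + e) ^ (r - 2))) :=
      mul_nonneg he.le (mul_nonneg hr.le (mul_nonneg (by linarith) h0))
    linarith

theorem Profile.bound0 {r K : ℝ} {k k1 k2 : ℝ → ℝ} (h : Profile r K k k1 k2)
    {q : ℝ} (hq : 0 ≤ q) : |k q| ≤ K * q := by
  have d : DifferentiableOn ℝ k (interior (Set.Ici 0)) := fun q hq =>
    (h.deriv1 q (interior_subset hq)).differentiableAt.differentiableWithinAt
  have c : ContinuousOn k (Set.Ici 0) := fun q hq =>
    (h.deriv1 q hq).continuousAt.continuousWithinAt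
  have h1 := (convex_Ici (0 : ℝ)).image_sub_le_mul_sub_of_deriv_le c d (C := K)
    (fun x hx => (h.deriv1 x (interior_subset hx)).deriv ▸ h.le1 x (interior_subset hx))
    0 (Set.mem_Ici.2 le_rfl) q hq hq
  have h2 := (convex_Ici (0 : ℝ)).mul_sub_le_image_sub_of_le_deriv c d (C := 0)
    (fun x hx => (h.deriv1 x (interior_subset hx)).deriv ▸ h.nonneg1 x (interior_subset hx))
    0 (Set.mem_Ici.2 le_rfl) q hq hq
  rw [h.zero] at h1 h2
  rw [abs_le]
  constructor <;> linarith
/-! ### Composition of a holomorphic function with a regularized power -/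

/-- The function `k (|w|²) - c * k ((Im w)²)`, which is superharmonic along holomorphic `w` for a
suitable `c`. -/
def G0 (c : ℝ) (k : ℝ → ℝ) (w : ℂ) : ℝ := k (w.re ^ 2 + w.im ^ 2) - c * k (w.im ^ 2)

/-- The first derivative of `G0 c k` along a curve with position `w` and velocity `w1`. -/
def G1 (c : ℝ) (k1 : ℝ → ℝ) (w w1 : ℂ) : ℝ :=
  k1 (w.re ^ 2 + w.im ^ 2) * (2 * (w.re * w1.re + w.im * w1.im))
    - c * (k1 (w.im ^ 2) * (2 * (w.im * w1.im)))

/-- The second derivative of `G0 c k` along a curve with position `w`, velocity `w1` and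
acceleration `w2`. -/
def G2 (c : ℝ) (k1 k2 : ℝ → ℝ) (w w1 w2 : ℂ) : ℝ :=
  k2 (w.re ^ 2 + w.im ^ 2) * (2 * (w.re * w1.re + w.im * w1.im)) ^ 2
    + k1 (w.re ^ 2 + w.im ^ 2) *
      (2 * (w1.re ^ 2 + w1.im ^ 2 + w.re * w2.re + w.im * w2.im))
    - c * (k2 (w.im ^ 2) * (2 * (w.im * w1.im)) ^ 2
      + k1 (w.im ^ 2) * (2 * (w1.im ^ 2 + w.im * w2.im)))

theorem hasDerivAt_re' {f : ℝ → ℂ} {f1 : ℂ} {x : ℝ} (h : HasDerivAt f f1 x) :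
    HasDerivAt (fun y => (f y).re) f1.re x :=
  (Complex.reCLM.hasFDerivAt (x := f x)).comp_hasDerivAt x h

theorem hasDerivAt_im' {f : ℝ → ℂ} {f1 : ℂ} {x : ℝ} (h : HasDerivAt f f1 x) :
    HasDerivAt (fun y => (f y).im) f1.im x :=
  (Complex.imCLM.hasFDerivAt (x := f x)).comp_hasDerivAt x h

theorem hasDerivAt_G0 {r K : ℝ} {k k1 k2 : ℝ → ℝ} (h : Profile r K k k1 k2) (c : ℝ)
    {f : ℝ → ℂ} {f1 : ℂ} {x : ℝ} (hf : HasDerivAt f f1 x) :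
    HasDerivAt (fun y => G0 c k (f y)) (G1 c k1 (f x) f1) x := by
  have hu := hasDerivAt_re' hf
  have hv := hasDerivAt_im' hf
  have a1 := (h.deriv1 _ (by positivity : 0 ≤ (f x).re ^ 2 + (f x).im ^ 2)).comp x
    ((hu.pow 2).add (hv.pow 2))
  have a2 := (h.deriv1 _ (by positivity : 0 ≤ (f x).im ^ 2)).comp x (hv.pow 2)
  refine (a1.sub (a2.const_mul c)).congr_deriv ?_
  simp only [G1]
  push_cast
  ring

theorem hasDerivAt_G1 {r K : ℝ} {k k1 k2 : ℝ → ℝ} (h : Profile r K k k1 k2) (c : ℝ)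
    {f f1 : ℝ → ℂ} {f2 : ℂ} {x : ℝ} (hf : HasDerivAt f (f1 x) x) (hf1 : HasDerivAt f1 f2 x) :
    HasDerivAt (fun y => G1 c k1 (f y) (f1 y)) (G2 c k1 k2 (f x) (f1 x) f2) x := by
  have hu := hasDerivAt_re' hf
  have hv := hasDerivAt_im' hf
  have hu1 := hasDerivAt_re' hf1
  have hv1 := hasDerivAt_im' hf1
  have a1 := (h.deriv2 _ (by positivity : 0 ≤ (f x).re ^ 2 + (f x).im ^ 2)).comp x
    ((hu.pow 2).add (hv.pow 2))
  have a2 := (h.deriv2 _ (by positivity : 0 ≤ (f x).im ^ 2)).comp x (hv.pow 2)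
  refine ((a1.mul (((hu.mul hu1).add (hv.mul hv1)).const_mul 2)).sub
    ((a2.mul ((hv.mul hv1).const_mul 2)).const_mul c)).congr_deriv ?_
  simp only [G2, Function.comp, Pi.add_apply, Pi.mul_apply, Pi.pow_apply]
  push_cast
  ring

/-- Superharmonicity. If `w = F (x + i s)` with `F` holomorphic, the derivatives of `w` are `F'`, `F''`
in the direction `x` and `i F'`, `-F''` in the direction `s`, so the left side is the Laplacian of
`G0 c k ∘ F`. -/
theorem G2_laplace {r K : ℝ} {k k1 k2 : ℝ → ℝ} (h : Profile r K k k1 k2) (hr : 1 / 2 < r)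
    (w w1 w2 : ℂ) :
    G2 (2 / (2 * r - 1)) k1 k2 w (Complex.I * w1) (-w2)
      + G2 (2 / (2 * r - 1)) k1 k2 w w1 w2 ≤ 0 := by
  set c := 2 / (2 * r - 1) with hc
  have hc0 : 0 < c := by apply div_pos two_pos; linarith
  have hcr : c * (2 * r - 1) = 2 := div_mul_cancel₀ _ (by linarith)
  have e : G2 c k1 k2 w (Complex.I * w1) (-w2) + G2 c k1 k2 w w1 w2 =
      (w1.re ^ 2 + w1.im ^ 2) *
        (4 * ((w.re ^ 2 + w.im ^ 2) * k2 (w.re ^ 2 + w.im ^ 2)) + 4 * k1 (w.re ^ 2 + w.im ^ 2)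
          - c * (4 * (w.im ^ 2 * k2 (w.im ^ 2)) + 2 * k1 (w.im ^ 2))) := by
    simp only [G2, Complex.mul_re, Complex.mul_im, Complex.I_re, Complex.I_im, Complex.neg_re,
      Complex.neg_im]
    ring
  rw [e]
  have hq : 0 ≤ w.re ^ 2 + w.im ^ 2 := by positivity
  have hv : 0 ≤ w.im ^ 2 := by positivity
  refine mul_nonpos_of_nonneg_of_nonpos (by positivity) ?_
  have h1 := mul_nonpos_of_nonneg_of_nonpos hq (h.nonpos2 _ hq)
  have h2 := h.anti1 (w.im ^ 2) (w.re ^ 2 + w.im ^ 2) hv (by nlinarith [sq_nonneg w.re])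
  have h3 := mul_le_mul_of_nonneg_left (h.elliptic _ hv) hc0.le
  have h4 : c * (4 * ((r - 1) * k1 (w.im ^ 2)) + 2 * k1 (w.im ^ 2)) = 4 * k1 (w.im ^ 2) := by
    linear_combination 2 * k1 (w.im ^ 2) * hcr
  linarith

/-- `G0`, `G1` and `G2` are quadratically small when `w`, `w1`, `w2` are. -/
theorem G_bounds {r K : ℝ} {k k1 k2 : ℝ → ℝ} (h : Profile r K k k1 k2) {c : ℝ} (hc : 0 ≤ c)
    {b M : ℝ} (hb : 0 ≤ b) (hbM : b ≤ M) {w w1 w2 : ℂ}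
    (h0 : ‖w‖ ≤ b) (h1 : ‖w1‖ ≤ b) (h2 : ‖w2‖ ≤ b) :
    |G0 c k w| ≤ (1 + c) * K * (16 * (1 + M ^ 2)) * b ^ 2 ∧
    |G1 c k1 w w1| ≤ (1 + c) * K * (16 * (1 + M ^ 2)) * b ^ 2 ∧
    |G2 c k1 k2 w w1 w2| ≤ (1 + c) * K * (16 * (1 + M ^ 2)) * b ^ 2 := by
  have hK : 0 ≤ K := (h.nonneg1 0 le_rfl).trans (h.le1 0 le_rfl)
  have hq : 0 ≤ w.re ^ 2 + w.im ^ 2 := by positivity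
  have hv : 0 ≤ w.im ^ 2 := by positivity
  have k1b : ∀ q, 0 ≤ q → |k1 q| ≤ K := fun q hq => abs_le.2
    ⟨by linarith [h.nonneg1 q hq], h.le1 q hq⟩
  have ab : ∀ {x y X Y : ℝ}, |x| ≤ X → |y| ≤ Y → |x * y| ≤ X * Y := fun {x y X Y} hx hy => by
    rw [abs_mul]
    exact mul_le_mul hx hy (abs_nonneg _) ((abs_nonneg _).trans hx)
  have ad : ∀ {x y X Y : ℝ}, |x| ≤ X → |y| ≤ Y → |x + y| ≤ X + Y := fun hx hy =>
    (abs_add_le _ _).trans (add_le_add hx hy)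
  have sb : ∀ {x y X Y : ℝ}, |x| ≤ X → |y| ≤ Y → |x - y| ≤ X + Y := fun hx hy =>
    (abs_sub _ _).trans (add_le_add hx hy)
  have u0 := (Complex.abs_re_le_norm w).trans h0
  have v0 := (Complex.abs_im_le_norm w).trans h0
  have u1 := (Complex.abs_re_le_norm w1).trans h1
  have v1 := (Complex.abs_im_le_norm w1).trans h1
  have u2 := (Complex.abs_re_le_norm w2).trans h2
  have v2 := (Complex.abs_im_le_norm w2).trans h2
  have t2 : |(2 : ℝ)| ≤ 2 := by norm_num
  have tc : |c| ≤ c := (abs_of_nonneg hc).le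
  have sq : ∀ {x : ℝ}, |x| ≤ b → x ^ 2 ≤ b ^ 2 := fun hx =>
    sq_le_sq' (abs_le.1 hx).1 (abs_le.1 hx).2
  have sq' : ∀ {x X : ℝ}, |x| ≤ X → |x ^ 2| ≤ X ^ 2 := fun hx => by
    rw [abs_pow]; exact pow_le_pow_left₀ (abs_nonneg _) hx 2
  have hb2 : b ^ 2 * b ^ 2 ≤ M ^ 2 * b ^ 2 := by gcongr
  have hb20 := sq_nonneg b
  have P1 : 0 ≤ K * b ^ 2 := by positivity
  have P2 : 0 ≤ c * K * b ^ 2 := by positivity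
  have P3 : 0 ≤ K * (M ^ 2 * b ^ 2) := by positivity
  have P4 : 0 ≤ c * K * (M ^ 2 * b ^ 2) := by positivity
  have P5 : K * (b ^ 2 * b ^ 2) ≤ K * (M ^ 2 * b ^ 2) := by gcongr
  have P6 : c * K * (b ^ 2 * b ^ 2) ≤ c * K * (M ^ 2 * b ^ 2) := by gcongr
  refine ⟨?_, ?_, ?_⟩
  · have := sb (h.bound0 hq) (ab tc (h.bound0 hv))
    have e1 := mul_le_mul_of_nonneg_left (add_le_add (sq u0) (sq v0)) hK
    have e2 := mul_le_mul_of_nonneg_left (sq v0) (mul_nonneg hc hK)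
    unfold G0
    nlinarith
  · have := sb (ab (k1b _ hq) (ab t2 (ad (ab u0 u1) (ab v0 v1))))
      (ab tc (ab (k1b _ hv) (ab t2 (ab v0 v1))))
    unfold G1
    refine this.trans ?_
    nlinarith
  · have := sb (ad (ab (h.bound2 _ hq) (sq' (ab t2 (ad (ab u0 u1) (ab v0 v1)))))
        (ab (k1b _ hq) (ab t2 (ad (ad (ad (sq' u1) (sq' v1)) (ab u0 u2)) (ab v0 v2)))))
      (ab tc (ad (ab (h.bound2 _ hv) (sq' (ab t2 (ab v0 v1))))
        (ab (k1b _ hv) (ab t2 (ad (sq' v1) (ab v0 v2))))))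
    unfold G2
    refine this.trans ?_
    nlinarith

/-! ### Decaying holomorphic functions on a half plane -/

/-- `F` is holomorphic on the half plane `{Im z > a}`, with first and second derivatives `F1` and
`F2`, and all three are bounded there by `M / (1 + |z|²)`. -/
structure HalfPlaneDecay (a M : ℝ) (F F1 F2 : ℂ → ℂ) : Prop where
  deriv1 : ∀ z : ℂ, a < z.im → HasDerivAt F (F1 z) z
  deriv2 : ∀ z : ℂ, a < z.im → HasDerivAt F1 (F2 z) z
  cont2 : ∀ z : ℂ, a < z.im → ContinuousAt F2 z
  bound0 : ∀ z : ℂ, a < z.im → ‖F z‖ ≤ M / (1 + ‖z‖ ^ 2)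
  bound1 : ∀ z : ℂ, a < z.im → ‖F1 z‖ ≤ M / (1 + ‖z‖ ^ 2)
  bound2 : ∀ z : ℂ, a < z.im → ‖F2 z‖ ≤ M / (1 + ‖z‖ ^ 2)

/-- The point `x + i s`. -/
def pt (x s : ℝ) : ℂ := ⟨x, s⟩

theorem norm_pt_sq (x s : ℝ) : ‖pt x s‖ ^ 2 = x ^ 2 + s ^ 2 := by
  rw [← Complex.normSq_eq_norm_sq, Complex.normSq_apply, pt]; ring

theorem hasDerivAt_pt_x (x s : ℝ) : HasDerivAt (fun ξ => pt ξ s) 1 x := by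
  have h := (Complex.ofRealCLM.hasDerivAt (x := x)).add_const ((s : ℂ) * Complex.I)
  refine (h.congr_deriv (by simp)).congr_of_eventuallyEq (.of_forall fun y => ?_)
  apply Complex.ext <;> simp [pt]

theorem hasDerivAt_pt_s (x s : ℝ) : HasDerivAt (fun σ => pt x σ) Complex.I s := by
  have h := ((Complex.ofRealCLM.hasDerivAt (x := s)).mul_const Complex.I).const_add (x : ℂ)
  refine (h.congr_deriv (by simp)).congr_of_eventuallyEq (.of_forall fun y => ?_)
  apply Complex.ext <;> simp [pt]

theorem continuous_pt (s : ℝ) : Continuous fun ξ => pt ξ s :=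
  continuous_iff_continuousAt.mpr fun x => (hasDerivAt_pt_x x s).continuousAt

theorem HalfPlaneDecay.nonneg {a M : ℝ} {F F1 F2 : ℂ → ℂ} (H : HalfPlaneDecay a M F F1 F2) :
    0 ≤ M := by
  have h := (norm_nonneg _).trans (H.bound0 (pt 0 (a + 1)) (by simp [pt]))
  by_contra hneg
  exact absurd (div_neg_of_neg_of_pos (not_le.mp hneg)
    (by positivity : 0 < 1 + ‖pt 0 (a + 1)‖ ^ 2)) (not_lt.mpr h)

theorem HalfPlaneDecay.continuous {a M : ℝ} {F F1 F2 : ℂ → ℂ} (H : HalfPlaneDecay a M F F1 F2)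
    {s : ℝ} (hs : a < s) :
    Continuous fun x => F (pt x s) :=
  continuous_iff_continuousAt.mpr fun x =>
    ContinuousAt.comp (f := fun x => pt x s) (H.deriv1 (pt x s) hs).continuousAt
      (continuous_pt s).continuousAt

theorem HalfPlaneDecay.continuous1 {a M : ℝ} {F F1 F2 : ℂ → ℂ} (H : HalfPlaneDecay a M F F1 F2)
    {s : ℝ} (hs : a < s) : Continuous fun x => F1 (pt x s) :=
  continuous_iff_continuousAt.mpr fun x =>
    ContinuousAt.comp (f := fun x => pt x s) (H.deriv2 (pt x s) hs).continuousAt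
      (continuous_pt s).continuousAt

theorem HalfPlaneDecay.continuous2 {a M : ℝ} {F F1 F2 : ℂ → ℂ} (H : HalfPlaneDecay a M F F1 F2)
    {s : ℝ} (hs : a < s) : Continuous fun x => F2 (pt x s) :=
  continuous_iff_continuousAt.mpr fun x =>
    ContinuousAt.comp (f := fun x => pt x s) (H.cont2 (pt x s) hs) (continuous_pt s).continuousAt

theorem continuous_comp_of_nonneg {φ : ℝ → ℝ} (hφ : ∀ q, 0 ≤ q → ContinuousAt φ q) {q : ℝ → ℝ}
    (hq : Continuous q) (h0 : ∀ x, 0 ≤ q x) : Continuous fun x => φ (q x) :=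
  continuous_iff_continuousAt.mpr fun x =>
    ContinuousAt.comp (f := q) (hφ _ (h0 x)) hq.continuousAt

theorem continuous_G1 {r K : ℝ} {k k1 k2 : ℝ → ℝ} (h : Profile r K k k1 k2) (c : ℝ)
    {f f1 : ℝ → ℂ} (hf : Continuous f) (hf1 : Continuous f1) :
    Continuous fun x => G1 c k1 (f x) (f1 x) := by
  have u := Complex.continuous_re.comp hf
  have v := Complex.continuous_im.comp hf
  have u1 := Complex.continuous_re.comp hf1
  have v1 := Complex.continuous_im.comp hf1
  have hk1 : ∀ q, 0 ≤ q → ContinuousAt k1 q := fun q hq => (h.deriv2 q hq).continuousAt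
  have c1 := continuous_comp_of_nonneg hk1 ((u.pow 2).add (v.pow 2)) fun x =>
    add_nonneg (sq_nonneg _) (sq_nonneg _)
  have c3 := continuous_comp_of_nonneg hk1 (v.pow 2) fun x => sq_nonneg _
  exact (c1.mul (continuous_const.mul ((u.mul u1).add (v.mul v1)))).sub
    (continuous_const.mul (c3.mul (continuous_const.mul (v.mul v1))))

theorem continuous_G2 {r K : ℝ} {k k1 k2 : ℝ → ℝ} (h : Profile r K k k1 k2) (c : ℝ)
    {f f1 f2 : ℝ → ℂ} (hf : Continuous f) (hf1 : Continuous f1) (hf2 : Continuous f2) :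
    Continuous fun x => G2 c k1 k2 (f x) (f1 x) (f2 x) := by
  have u := Complex.continuous_re.comp hf
  have v := Complex.continuous_im.comp hf
  have u1 := Complex.continuous_re.comp hf1
  have v1 := Complex.continuous_im.comp hf1
  have u2 := Complex.continuous_re.comp hf2
  have v2 := Complex.continuous_im.comp hf2
  have hk1 : ∀ q, 0 ≤ q → ContinuousAt k1 q := fun q hq => (h.deriv2 q hq).continuousAt
  have hq : ∀ x, 0 ≤ (f x).re ^ 2 + (f x).im ^ 2 := fun x => by positivity
  have hv : ∀ x, 0 ≤ (f x).im ^ 2 := fun x => by positivity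
  have c1 := continuous_comp_of_nonneg hk1 ((u.pow 2).add (v.pow 2)) hq
  have c2 := continuous_comp_of_nonneg h.cont2 ((u.pow 2).add (v.pow 2)) hq
  have c3 := continuous_comp_of_nonneg hk1 (v.pow 2) hv
  have c4 := continuous_comp_of_nonneg h.cont2 (v.pow 2) hv
  have cc := continuous_const (X := ℝ) (y := c)
  have two := continuous_const (X := ℝ) (y := (2 : ℝ))
  exact ((c2.mul ((two.mul ((u.mul u1).add (v.mul v1))).pow 2)).add
    (c1.mul (two.mul ((((u1.pow 2).add (v1.pow 2)).add (u.mul u2)).add (v.mul v2))))).sub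
    (cc.mul ((c4.mul ((two.mul (v.mul v1)).pow 2)).add
      (c3.mul (two.mul ((v1.pow 2).add (v.mul v2))))))

theorem integral_G0_nonpos {r K : ℝ} {k k1 k2 : ℝ → ℝ} (h : Profile r K k k1 k2)
    (hr : 1 / 2 < r) {a M : ℝ} {F F1 F2 : ℂ → ℂ} (H : HalfPlaneDecay a M F F1 F2)
    {t : ℝ} (ht : a < t) :
    ∫ x, G0 (2 / (2 * r - 1)) k (F (pt x t)) ≤ 0 := by
  set c := 2 / (2 * r - 1) with hc
  have hc0 : 0 < c := by apply div_pos two_pos; linarith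
  have hM := H.nonneg
  have hK : 0 ≤ K := (h.nonneg1 0 le_rfl).trans (h.le1 0 le_rfl)
  have dFx : ∀ x s, a < s → HasDerivAt (fun ξ => F (pt ξ s)) (F1 (pt x s)) x := fun x s hs =>
    ((H.deriv1 (pt x s) hs).comp x (hasDerivAt_pt_x x s)).congr_deriv (mul_one _)
  have dF1x : ∀ x s, a < s → HasDerivAt (fun ξ => F1 (pt ξ s)) (F2 (pt x s)) x := fun x s hs =>
    ((H.deriv2 (pt x s) hs).comp x (hasDerivAt_pt_x x s)).congr_deriv (mul_one _)
  have dFs : ∀ x s, a < s → HasDerivAt (fun σ => F (pt x σ)) (Complex.I * F1 (pt x s)) s :=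
    fun x s hs =>
    ((H.deriv1 (pt x s) hs).comp s (hasDerivAt_pt_s x s)).congr_deriv (mul_comm _ _)
  have dF1s : ∀ x s, a < s →
      HasDerivAt (fun σ => Complex.I * F1 (pt x σ)) (-F2 (pt x s)) s := fun x s hs =>
    (((H.deriv2 (pt x s) hs).comp s (hasDerivAt_pt_s x s)).const_mul Complex.I).congr_deriv
      (by linear_combination F2 (pt x s) * Complex.I_mul_I)
  have bd : ∀ x s : ℝ, ∀ w w1 w2 : ℂ, ‖w‖ ≤ M / (1 + ‖pt x s‖ ^ 2) →
      ‖w1‖ ≤ M / (1 + ‖pt x s‖ ^ 2) → ‖w2‖ ≤ M / (1 + ‖pt x s‖ ^ 2) →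
      |G0 c k w| ≤ (1 + c) * K * (16 * (1 + M ^ 2)) * M ^ 2 / (1 + s ^ 2) * (1 + x ^ 2)⁻¹ ∧
      |G1 c k1 w w1| ≤ (1 + c) * K * (16 * (1 + M ^ 2)) * M ^ 2 / (1 + s ^ 2) * (1 + x ^ 2)⁻¹ ∧
      |G2 c k1 k2 w w1 w2| ≤
        (1 + c) * K * (16 * (1 + M ^ 2)) * M ^ 2 / (1 + s ^ 2) * (1 + x ^ 2)⁻¹ := by
    intro x s w w1 w2 h0 h1 h2
    have hb0 : 0 ≤ M / (1 + ‖pt x s‖ ^ 2) := by positivity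
    have hbM : M / (1 + ‖pt x s‖ ^ 2) ≤ M := div_le_self hM (by nlinarith [sq_nonneg ‖pt x s‖])
    have hle : (1 + c) * K * (16 * (1 + M ^ 2)) * (M / (1 + ‖pt x s‖ ^ 2)) ^ 2 ≤
        (1 + c) * K * (16 * (1 + M ^ 2)) * M ^ 2 / (1 + s ^ 2) * (1 + x ^ 2)⁻¹ := by
      rw [norm_pt_sq, div_pow, mul_div_assoc', ← div_eq_mul_inv, div_div]
      gcongr
      nlinarith [sq_nonneg x, sq_nonneg s, sq_nonneg (x ^ 2), sq_nonneg (s ^ 2),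
        mul_nonneg (sq_nonneg x) (sq_nonneg s)]
    obtain ⟨A, B, C⟩ := G_bounds h hc0.le hb0 hbM h0 h1 h2
    exact ⟨A.trans hle, B.trans hle, C.trans hle⟩
  have nI : ∀ w : ℂ, ‖Complex.I * w‖ = ‖w‖ := fun w => by simp
  refine integral_nonpos_of_superharmonic (a := a)
    (M := (1 + c) * K * (16 * (1 + M ^ 2)) * M ^ 2) ht
    (g := fun x s => G0 c k (F (pt x s)))
    (gs := fun x s => G1 c k1 (F (pt x s)) (Complex.I * F1 (pt x s)))
    (gss := fun x s => G2 c k1 k2 (F (pt x s)) (Complex.I * F1 (pt x s)) (-F2 (pt x s)))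
    (gx := fun x s => G1 c k1 (F (pt x s)) (F1 (pt x s)))
    (gxx := fun x s => G2 c k1 k2 (F (pt x s)) (F1 (pt x s)) (F2 (pt x s)))
    ?_ ?_ ?_ ?_ ?_ ?_ ?_ ?_ ?_ ?_ ?_ ?_ ?_
  · exact fun x s hs => hasDerivAt_G0 h c (dFs x s hs)
  · exact fun x s hs => hasDerivAt_G1 h c (f1 := fun σ => Complex.I * F1 (pt x σ))
      (dFs x s hs) (dF1s x s hs)
  · exact fun x s hs => hasDerivAt_G0 h c (dFx x s hs)
  · exact fun x s hs => hasDerivAt_G1 h c (f1 := fun ξ => F1 (pt ξ s))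
      (dFx x s hs) (dF1x x s hs)
  · exact fun s hs => continuous_G1 h c (H.continuous hs)
      (continuous_const.mul (H.continuous1 hs))
  · exact fun s hs => continuous_G2 h c (H.continuous hs)
      (continuous_const.mul (H.continuous1 hs)) (H.continuous2 hs).neg
  · exact fun s hs => continuous_G2 h c (H.continuous hs) (H.continuous1 hs) (H.continuous2 hs)
  · exact fun x s hs => (bd x s _ _ _ (H.bound0 _ hs) (H.bound1 _ hs) (H.bound2 _ hs)).1
  · exact fun x s hs => (bd x s _ _ _ (H.bound0 _ hs) ((nI _).trans_le (H.bound1 _ hs))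
      (H.bound2 _ hs)).2.1
  · exact fun x s hs => (bd x s _ _ _ (H.bound0 _ hs) ((nI _).trans_le (H.bound1 _ hs))
      ((norm_neg _).trans_le (H.bound2 _ hs))).2.2
  · exact fun x s hs => (bd x s _ _ _ (H.bound0 _ hs) (H.bound1 _ hs) (H.bound2 _ hs)).2.1
  · exact fun x s hs => (bd x s _ _ _ (H.bound0 _ hs) (H.bound1 _ hs) (H.bound2 _ hs)).2.2
  · exact fun x s _ => G2_laplace h hr _ _ _

/-! ### The Riesz inequality -/
theorem HalfPlaneDecay.norm_le_inv {a M : ℝ} {F F1 F2 : ℂ → ℂ} (H : HalfPlaneDecay a M F F1 F2)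
    {t : ℝ} (ht : a < t) (x : ℝ) : ‖F (pt x t)‖ ≤ M * (1 + x ^ 2)⁻¹ := by
  refine (H.bound0 (pt x t) ht).trans ?_
  rw [norm_pt_sq, div_eq_mul_inv]
  have := H.nonneg
  gcongr
  nlinarith [sq_nonneg t]

theorem HalfPlaneDecay.integrable_of_le {a M : ℝ} {F F1 F2 : ℂ → ℂ} (H : HalfPlaneDecay a M F F1 F2)
    {t : ℝ} (ht : a < t) {p : ℝ} (hp : 1 ≤ p) {f : ℝ → ℝ} (hf : Continuous f)
    (hle : ∀ x, |f x| ≤ ‖F (pt x t)‖) : Integrable fun x => |f x| ^ p := by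
  have hM := H.nonneg
  refine (integrable_inv_one_add_sq.const_mul (M ^ p)).mono'
    (hf.abs.rpow_const fun _ => Or.inr (by linarith)).aestronglyMeasurable
    (Filter.Eventually.of_forall fun x => ?_)
  have hw0 : 0 ≤ (1 + x ^ 2)⁻¹ := by positivity
  have hw1 : (1 + x ^ 2)⁻¹ ≤ 1 := inv_le_one_of_one_le₀ (by nlinarith [sq_nonneg x])
  rw [Real.norm_of_nonneg (by positivity)]
  calc |f x| ^ p ≤ (M * (1 + x ^ 2)⁻¹) ^ p :=
        Real.rpow_le_rpow (abs_nonneg _) ((hle x).trans (H.norm_le_inv ht x)) (by linarith)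
    _ = M ^ p * ((1 + x ^ 2)⁻¹) ^ p := Real.mul_rpow hM hw0
    _ ≤ M ^ p * (1 + x ^ 2)⁻¹ := by
        gcongr
        exact Real.rpow_le_self_of_le_one hw0 hw1 hp

theorem sq_rpow_half (x p : ℝ) : (x ^ 2) ^ (p / 2) = |x| ^ p := by
  rw [← sq_abs, ← Real.rpow_natCast, ← Real.rpow_mul (abs_nonneg _)]
  congr 1
  push_cast
  ring

open Filter Topology in
/-- The Riesz inequality for `1 < p ≤ 2`. -/
theorem riesz_small {p : ℝ} (hp : 1 < p) (hp2 : p ≤ 2) {a M : ℝ} {F F1 F2 : ℂ → ℂ}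
    (H : HalfPlaneDecay a M F F1 F2) {t : ℝ} (ht : a < t) :
    ∫ x, |(F (pt x t)).re| ^ p ≤ 2 / (p - 1) * ∫ x, |(F (pt x t)).im| ^ p := by
  have hc : 0 < 2 / (p - 1) := div_pos two_pos (by linarith)
  have cF := H.continuous ht
  have cu := Complex.continuous_re.comp cF
  have cv := Complex.continuous_im.comp cF
  have iu : Integrable fun x => |(F (pt x t)).re| ^ p :=
    H.integrable_of_le ht hp.le cu fun x => Complex.abs_re_le_norm _
  have iv : Integrable fun x => |(F (pt x t)).im| ^ p :=
    H.integrable_of_le ht hp.le cv fun x => Complex.abs_im_le_norm _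
  -- `(q + e)^(p/2) - e^(p/2) ≤ q^(p/2)` because `p / 2 ≤ 1`; this bounds the regularized integrals
  -- by the unregularized ones, on the right-hand side and as a dominating function
  have sub : ∀ e q : ℝ, 0 < e → 0 ≤ q → (q + e) ^ (p / 2) - e ^ (p / 2) ≤ q ^ (p / 2) := by
    intro e q he hq
    have := Real.rpow_add_le_add_rpow hq he.le (by linarith : 0 ≤ p / 2) (by linarith)
    linarith
  have nonneg : ∀ e q : ℝ, 0 < e → 0 ≤ q → 0 ≤ (q + e) ^ (p / 2) - e ^ (p / 2) := by
    intro e q he hq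
    have := Real.rpow_le_rpow he.le (by linarith : e ≤ q + e) (by linarith : 0 ≤ p / 2)
    linarith
  have meas : ∀ e : ℝ, ∀ q : ℝ → ℝ, Continuous q →
      Continuous fun x => (q x + e) ^ (p / 2) - e ^ (p / 2) := fun e q hq =>
    ((hq.add continuous_const).rpow_const fun _ => Or.inr (by linarith)).sub continuous_const
  have iv' : ∀ e : ℝ, 0 < e →
      Integrable fun x => ((F (pt x t)).im ^ 2 + e) ^ (p / 2) - e ^ (p / 2) := by
    intro e he
    refine iv.mono' (meas e _ (cv.pow 2)).aestronglyMeasurable (.of_forall fun x => ?_)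
    rw [Real.norm_of_nonneg (nonneg e _ he (sq_nonneg _)), ← sq_rpow_half]
    exact sub e _ he (sq_nonneg _)
  have iu' : ∀ e : ℝ, 0 < e →
      Integrable fun x => ((F (pt x t)).re ^ 2 + e) ^ (p / 2) - e ^ (p / 2) := by
    intro e he
    refine iu.mono' (meas e _ (cu.pow 2)).aestronglyMeasurable (.of_forall fun x => ?_)
    rw [Real.norm_of_nonneg (nonneg e _ he (sq_nonneg _)), ← sq_rpow_half]
    exact sub e _ he (sq_nonneg _)
  have iq : ∀ e : ℝ, 0 < e →
      Integrable fun x => ((F (pt x t)).re ^ 2 + (F (pt x t)).im ^ 2 + e) ^ (p / 2)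
        - e ^ (p / 2) := by
    intro e he
    refine (iu.add iv).mono' (meas e _ ((cu.pow 2).add (cv.pow 2))).aestronglyMeasurable
      (.of_forall fun x => ?_)
    rw [Real.norm_of_nonneg (nonneg e _ he (by positivity)), Pi.add_apply, ← sq_rpow_half,
      ← sq_rpow_half]
    exact (sub e _ he (by positivity)).trans
      (Real.rpow_add_le_add_rpow (sq_nonneg _) (sq_nonneg _) (by linarith) (by linarith))
  have main : ∀ e : ℝ, 0 < e →
      ∫ x, (((F (pt x t)).re ^ 2 + e) ^ (p / 2) - e ^ (p / 2)) ≤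
        2 / (p - 1) * ∫ x, |(F (pt x t)).im| ^ p := by
    intro e he
    obtain ⟨K, hK⟩ := exists_profile (r := p / 2) (by linarith) (by linarith) he
    have h := integral_G0_nonpos hK (by linarith) H ht
    rw [show 2 * (p / 2) - 1 = p - 1 by ring] at h
    unfold G0 at h
    rw [integral_sub (iq e he) ((iv' e he).const_mul _), integral_const_mul] at h
    have h1 : ∫ x, (((F (pt x t)).re ^ 2 + e) ^ (p / 2) - e ^ (p / 2)) ≤
        ∫ x, (((F (pt x t)).re ^ 2 + (F (pt x t)).im ^ 2 + e) ^ (p / 2) - e ^ (p / 2)) := by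
      refine integral_mono (iu' e he) (iq e he) fun x => ?_
      have : ((F (pt x t)).re ^ 2 + e) ^ (p / 2) ≤
          ((F (pt x t)).re ^ 2 + (F (pt x t)).im ^ 2 + e) ^ (p / 2) :=
        Real.rpow_le_rpow (by positivity) (by nlinarith [sq_nonneg (F (pt x t)).im])
          (by linarith)
      simpa using this
    have h2 : ∫ x, (((F (pt x t)).im ^ 2 + e) ^ (p / 2) - e ^ (p / 2)) ≤
        ∫ x, |(F (pt x t)).im| ^ p := by
      refine integral_mono (iv' e he) iv fun x => ?_
      simp only [← sq_rpow_half]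
      exact sub e _ he (sq_nonneg _)
    have := mul_le_mul_of_nonneg_left h2 hc.le
    linarith
  have lim : Tendsto (fun n : ℕ => ∫ x, (((F (pt x t)).re ^ 2 + 1 / ((n : ℝ) + 1)) ^ (p / 2)
      - (1 / ((n : ℝ) + 1)) ^ (p / 2))) atTop (𝓝 (∫ x, |(F (pt x t)).re| ^ p)) := by
    refine tendsto_integral_of_dominated_convergence _
      (fun n => (meas _ _ (cu.pow 2)).aestronglyMeasurable) iu (fun n => .of_forall fun x => ?_)
      (.of_forall fun x => ?_)
    · rw [Real.norm_of_nonneg (nonneg _ _ (by positivity) (sq_nonneg _)), ← sq_rpow_half]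
      exact sub _ _ (by positivity) (sq_nonneg _)
    · have cont : Continuous fun e : ℝ => ((F (pt x t)).re ^ 2 + e) ^ (p / 2) - e ^ (p / 2) :=
        ((continuous_const.add continuous_id).rpow_const fun _ => Or.inr (by linarith)).sub
          (continuous_id.rpow_const fun _ => Or.inr (by linarith))
      have := (cont.tendsto 0).comp tendsto_one_div_add_atTop_nhds_zero_nat
      rw [add_zero, Real.zero_rpow (by linarith), sub_zero, sq_rpow_half] at this
      exact this
  exact le_of_tendsto' lim fun n => main _ (by positivity)

theorem HalfPlaneDecay.square {a M : ℝ} {F F1 F2 : ℂ → ℂ} (H : HalfPlaneDecay a M F F1 F2) :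
    HalfPlaneDecay a (4 * M ^ 2) (fun z => F z ^ 2) (fun z => 2 * F z * F1 z)
      (fun z => 2 * F1 z ^ 2 + 2 * F z * F2 z) := by
  have hM := H.nonneg
  have key : ∀ z : ℂ, (M / (1 + ‖z‖ ^ 2)) * (M / (1 + ‖z‖ ^ 2)) ≤ M ^ 2 / (1 + ‖z‖ ^ 2) := by
    intro z
    rw [div_mul_div_comm, ← pow_two]
    gcongr
    nlinarith [sq_nonneg ‖z‖]
  have e : ∀ z : ℂ, 4 * M ^ 2 / (1 + ‖z‖ ^ 2) = 4 * (M ^ 2 / (1 + ‖z‖ ^ 2)) := fun z => by ring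
  have mm : ∀ z w w' : ℂ, ‖w‖ ≤ M / (1 + ‖z‖ ^ 2) → ‖w'‖ ≤ M / (1 + ‖z‖ ^ 2) →
      ‖w‖ * ‖w'‖ ≤ M ^ 2 / (1 + ‖z‖ ^ 2) := fun z w w' h h' =>
    (mul_le_mul h h' (norm_nonneg _) ((norm_nonneg _).trans h)).trans (key z)
  have pos : ∀ z : ℂ, 0 ≤ M ^ 2 / (1 + ‖z‖ ^ 2) := fun z => by positivity
  refine ⟨fun z hz => ?_, fun z hz => ?_, fun z hz => ?_, fun z hz => ?_, fun z hz => ?_,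
    fun z hz => ?_⟩
  · refine ((H.deriv1 z hz).pow 2).congr_deriv ?_
    push_cast
    ring
  · refine (((H.deriv1 z hz).const_mul 2).mul (H.deriv2 z hz)).congr_deriv ?_
    ring
  · exact (continuousAt_const.mul ((H.deriv2 z hz).continuousAt.pow 2)).add
      ((continuousAt_const.mul (H.deriv1 z hz).continuousAt).mul (H.cont2 z hz))
  · have := mm z _ _ (H.bound0 z hz) (H.bound0 z hz)
    rw [e, norm_pow, pow_two]
    linarith [pos z]
  · have := mm z _ _ (H.bound0 z hz) (H.bound1 z hz)
    rw [e, norm_mul, norm_mul, Complex.norm_two]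
    linarith [pos z]
  · have h1 := mm z _ _ (H.bound1 z hz) (H.bound1 z hz)
    have h2 := mm z _ _ (H.bound0 z hz) (H.bound2 z hz)
    refine (norm_add_le _ _).trans ?_
    rw [e, norm_mul, norm_mul, norm_mul, Complex.norm_two, norm_pow, pow_two]
    linarith [pos z]

/-- The Riesz inequality with exponent `p` and constant `C`, uniformly over all decaying holomorphic
functions on half planes and all horizontal lines. -/
def RieszBound (p C : ℝ) : Prop :=
  ∀ (a M : ℝ) (F F1 F2 : ℂ → ℂ), HalfPlaneDecay a M F F1 F2 → ∀ t, a < t →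
    ∫ x, |(F (pt x t)).re| ^ p ≤ C * ∫ x, |(F (pt x t)).im| ^ p

theorem add_rpow_le_two_rpow {x y p : ℝ} (hx : 0 ≤ x) (hy : 0 ≤ y) (hp : 0 ≤ p) :
    (x + y) ^ p ≤ 2 ^ p * (x ^ p + y ^ p) := by
  have hx' := Real.rpow_nonneg hx p
  have hy' := Real.rpow_nonneg hy p
  have h2 : (0 : ℝ) ≤ 2 ^ p := by positivity
  rcases le_total x y with h | h
  · calc (x + y) ^ p ≤ (2 * y) ^ p := Real.rpow_le_rpow (by linarith) (by linarith) hp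
      _ = 2 ^ p * y ^ p := Real.mul_rpow (by norm_num) hy
      _ ≤ _ := mul_le_mul_of_nonneg_left (by linarith) h2
  · calc (x + y) ^ p ≤ (2 * x) ^ p := Real.rpow_le_rpow (by linarith) (by linarith) hp
      _ = 2 ^ p * x ^ p := Real.mul_rpow (by norm_num) hx
      _ ≤ _ := mul_le_mul_of_nonneg_left (by linarith) h2

theorem abs_rpow_two_mul (x p : ℝ) : |x| ^ (2 * p) = (x ^ 2) ^ p := by
  rw [← sq_rpow_half, mul_div_cancel_left₀ _ (two_ne_zero)]

/-- Passage from the exponent `p` to `2 p`, by applying the bound to `F ^ 2`. -/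
theorem riesz_double {p C : ℝ} (hp : 1 < p) (hC : 0 < C) (h : RieszBound p C) :
    ∃ C', 0 < C' ∧ RieszBound (2 * p) C' := by
  have h2p : (0 : ℝ) < 2 ^ p := by positivity
  -- `η = δ ^ p` is chosen so that the terms in `Re F` on the right add up to half the left side
  set η : ℝ := 1 / (2 * (2 ^ p * 2 ^ p * C)) with hη
  have hη0 : 0 < η := by positivity
  set δ : ℝ := η ^ (1 / p) with hδ
  have hδ0 : 0 < δ := Real.rpow_pos_of_pos hη0 _
  have hδη : δ ^ p = η := by
    rw [hδ, ← Real.rpow_mul hη0.le, one_div_mul_cancel (by linarith), Real.rpow_one]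
  have hη1 : 2 ^ p * 2 ^ p * C * η = 1 / 2 := by
    rw [hη]; field_simp
  refine ⟨2 * (2 ^ p * (2 ^ p * C * η⁻¹ + 1)), by positivity, ?_⟩
  intro a M F F1 F2 H t ht
  have cF := H.continuous ht
  have cu := Complex.continuous_re.comp cF
  have cv := Complex.continuous_im.comp cF
  have iu : Integrable fun x => |(F (pt x t)).re| ^ (2 * p) :=
    H.integrable_of_le ht (by linarith) cu fun x => Complex.abs_re_le_norm _
  have iv : Integrable fun x => |(F (pt x t)).im| ^ (2 * p) :=
    H.integrable_of_le ht (by linarith) cv fun x => Complex.abs_im_le_norm _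
  have cF2 := H.square.continuous ht
  have iw : Integrable fun x => |(F (pt x t) ^ 2).re| ^ p :=
    H.square.integrable_of_le ht hp.le (Complex.continuous_re.comp cF2)
      fun x => Complex.abs_re_le_norm _
  have iz : Integrable fun x => |(F (pt x t) ^ 2).im| ^ p :=
    H.square.integrable_of_le ht hp.le (Complex.continuous_im.comp cF2)
      fun x => Complex.abs_im_le_norm _
  have hW := h _ _ _ _ _ H.square t ht
  have hU : ∫ x, |(F (pt x t)).re| ^ (2 * p) ≤
      2 ^ p * ((∫ x, |(F (pt x t) ^ 2).re| ^ p) + ∫ x, |(F (pt x t)).im| ^ (2 * p)) := by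
    rw [← integral_add iw iv, ← integral_const_mul]
    refine integral_mono iu ((iw.add iv).const_mul _) fun x => ?_
    simp only [abs_rpow_two_mul]
    refine (Real.rpow_le_rpow (sq_nonneg _) ?_ (by linarith)).trans
      (add_rpow_le_two_rpow (abs_nonneg _) (sq_nonneg _) (by linarith))
    have : (F (pt x t) ^ 2).re = (F (pt x t)).re ^ 2 - (F (pt x t)).im ^ 2 := by
      rw [pow_two, Complex.mul_re]; ring
    rw [this]
    linarith [le_abs_self ((F (pt x t)).re ^ 2 - (F (pt x t)).im ^ 2)]
  have hZ : ∫ x, |(F (pt x t) ^ 2).im| ^ p ≤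
      2 ^ p * (η * (∫ x, |(F (pt x t)).re| ^ (2 * p))
        + η⁻¹ * ∫ x, |(F (pt x t)).im| ^ (2 * p)) := by
    rw [← integral_const_mul, ← integral_const_mul η⁻¹,
      ← integral_add (iu.const_mul _) (iv.const_mul _), ← integral_const_mul]
    refine integral_mono iz (((iu.const_mul _).add (iv.const_mul _)).const_mul _) fun x => ?_
    simp only [abs_rpow_two_mul]
    have e : (F (pt x t) ^ 2).im = 2 * ((F (pt x t)).re * (F (pt x t)).im) := by
      rw [pow_two, Complex.mul_im]; ring
    have young : |(F (pt x t) ^ 2).im| ≤ δ * (F (pt x t)).re ^ 2 + δ⁻¹ * (F (pt x t)).im ^ 2 := by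
      rw [e]
      generalize (F (pt x t)).re = u
      generalize (F (pt x t)).im = v
      have h1 : δ * u ^ 2 + δ⁻¹ * v ^ 2 - 2 * (u * v) = δ⁻¹ * (δ * u - v) ^ 2 := by
        field_simp; ring
      have h2 : δ * u ^ 2 + δ⁻¹ * v ^ 2 + 2 * (u * v) = δ⁻¹ * (δ * u + v) ^ 2 := by
        field_simp; ring
      have h3 : 0 ≤ δ⁻¹ * (δ * u - v) ^ 2 := by positivity
      have h4 : 0 ≤ δ⁻¹ * (δ * u + v) ^ 2 := by positivity
      rw [abs_le]
      constructor <;> linarith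
    refine (Real.rpow_le_rpow (abs_nonneg _) young (by linarith)).trans
      ((add_rpow_le_two_rpow (by positivity) (by positivity) (by linarith)).trans_eq ?_)
    rw [Real.mul_rpow hδ0.le (sq_nonneg _), Real.mul_rpow (inv_nonneg.2 hδ0.le) (sq_nonneg _),
      Real.inv_rpow hδ0.le, hδη]
  set U := ∫ x, |(F (pt x t)).re| ^ (2 * p)
  set V := ∫ x, |(F (pt x t)).im| ^ (2 * p)
  have h1 := hU.trans (mul_le_mul_of_nonneg_left
    (add_le_add_left (hW.trans (mul_le_mul_of_nonneg_left hZ hC.le)) V) h2p.le)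
  have h2 : 2 ^ p * (C * (2 ^ p * (η * U + η⁻¹ * V)) + V) =
      1 / 2 * U + 2 ^ p * (2 ^ p * C * η⁻¹ + 1) * V := by
    rw [← hη1]; ring
  rw [h2] at h1
  linarith

theorem riesz_all (n : ℕ) : ∀ p : ℝ, 1 < p → p ≤ 2 ^ (n + 1) → ∃ C, 0 < C ∧ RieszBound p C := by
  induction n with
  | zero =>
    intro p hp hp2
    exact ⟨2 / (p - 1), div_pos two_pos (by linarith), fun a M F F1 F2 H t ht =>
      riesz_small hp (by simpa using hp2) H ht⟩
  | succ n ih =>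
    intro p hp hp2
    rcases le_or_gt p 2 with h | h
    · exact ⟨2 / (p - 1), div_pos two_pos (by linarith), fun a M F F1 F2 H t ht =>
        riesz_small hp h H ht⟩
    · obtain ⟨C, hC, hR⟩ := ih (p / 2) (by linarith) (by rw [pow_succ] at hp2; linarith)
      obtain ⟨C', hC', hR'⟩ := riesz_double (by linarith) hC hR
      rw [mul_div_cancel₀ _ two_ne_zero] at hR'
      exact ⟨C', hC', hR'⟩

theorem exists_rieszBound {p : ℝ} (hp : 1 < p) : ∃ C, 0 < C ∧ RieszBound p C := by
  obtain ⟨n, hn⟩ := pow_unbounded_of_one_lt p (one_lt_two (α := ℝ))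
  exact riesz_all n p hp (hn.le.trans (pow_le_pow_right₀ one_le_two n.le_succ))

/-! ### Cauchy-type integrals and the kernels `φ_t`, `ψ_t` -/

/-- The Cauchy-type integral `∫ A y / (z - y)ⁿ dy`. -/
noncomputable def cauchyPow (A : ℝ → ℝ) (n : ℕ) (z : ℂ) : ℂ :=
  ∫ y : ℝ, (A y : ℂ) * ((z - y) ^ n)⁻¹

theorem sub_ofReal_bound {a : ℝ} {z : ℂ} (hz : a < z.im) (y : ℝ) :
    a < ‖z - y‖ := by
  refine hz.trans_le ((le_abs_self _).trans ?_)
  simpa using Complex.abs_im_le_norm (z - y)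

theorem integrable_cauchyPow {A : ℝ → ℝ} (hA : Continuous A) (hc : HasCompactSupport A) (n : ℕ)
    {z : ℂ} (hz : 0 < z.im) : Integrable fun y : ℝ => (A y : ℂ) * ((z - y) ^ n)⁻¹ := by
  refine Continuous.integrable_of_hasCompactSupport ?_ ?_
  · refine (Complex.continuous_ofReal.comp hA).mul
      (((continuous_const.sub Complex.continuous_ofReal).pow n).inv₀ fun y => pow_ne_zero _ ?_)
    intro h
    have := congrArg Complex.im h
    simp at this
    linarith
  · exact (hc.comp_left (g := fun x : ℝ => (x : ℂ)) Complex.ofReal_zero).mul_right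

open Filter Topology in
theorem hasDerivAt_cauchyPow {A : ℝ → ℝ} (hA : Continuous A) (hc : HasCompactSupport A) (n : ℕ)
    {z : ℂ} (hz : 0 < z.im) :
    HasDerivAt (cauchyPow A n) (-n * cauchyPow A (n + 1) z) z := by
  have hU : {w : ℂ | z.im / 2 < w.im} ∈ 𝓝 z :=
    (isOpen_lt continuous_const Complex.continuous_im).mem_nhds (by simp; linarith)
  have iA : Integrable A := hA.integrable_of_hasCompactSupport hc
  have pos : ∀ w : ℂ, z.im / 2 < w.im → 0 < w.im := fun w hw => by linarith
  have key := hasDerivAt_integral_of_dominated_loc_of_deriv_le (𝕜 := ℂ) (x₀ := z)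
    (F := fun w (y : ℝ) => (A y : ℂ) * ((w - y) ^ n)⁻¹)
    (F' := fun w (y : ℝ) => -n * ((A y : ℂ) * ((w - y) ^ (n + 1))⁻¹))
    (bound := fun y => n * (|A y| * ((z.im / 2) ^ (n + 1))⁻¹)) (μ := volume) hU
    (by filter_upwards [hU] with w hw using
          (integrable_cauchyPow hA hc n (pos w hw)).aestronglyMeasurable)
    (integrable_cauchyPow hA hc n hz)
    ((integrable_cauchyPow hA hc (n + 1) hz).const_mul _).aestronglyMeasurable
    (.of_forall fun y w hw => ?_) ((iA.abs.mul_const _).const_mul _)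
    (.of_forall fun y w hw => ?_)
  · have := key.2
    rw [integral_const_mul] at this
    exact this
  · have hb := sub_ofReal_bound hw y
    rw [norm_mul, norm_mul, norm_inv, norm_pow, norm_neg, Complex.norm_natCast,
      Complex.norm_real, Real.norm_eq_abs]
    have : 0 < z.im / 2 := by linarith
    gcongr
  · have hne : w - y ≠ 0 := norm_pos_iff.1
      ((by linarith : 0 < z.im / 2).trans
        (sub_ofReal_bound hw y))
    have h1 := ((((hasDerivAt_id w).sub_const (y : ℂ)).pow n).inv
      (pow_ne_zero n hne)).const_mul (A y : ℂ)
    refine h1.congr_deriv ?_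
    rcases n with _ | n
    · simp
    · simp only [id, Nat.add_sub_cancel, mul_one, Pi.pow_apply]
      field_simp
      ring

theorem exists_hpd {A : ℝ → ℝ} (hA : Continuous A) (hc : HasCompactSupport A) {a : ℝ}
    (ha : 0 < a) (c : ℂ) : ∃ M, HalfPlaneDecay a M (fun z => c * cauchyPow A 3 z)
      (fun z => c * (-3 * cauchyPow A 4 z)) (fun z => c * (12 * cauchyPow A 5 z)) := by
  obtain ⟨L, hL0, hL⟩ : ∃ L : ℝ, 0 < L ∧ ∀ y, A y ≠ 0 → |y| ≤ L := by
    obtain ⟨L, hL0, hL⟩ := hc.isCompact.isBounded.exists_pos_norm_le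
    exact ⟨L, hL0, fun y hy => hL y (subset_tsupport A hy)⟩
  have iA : Integrable A := hA.integrable_of_hasCompactSupport hc
  -- on the support of `A`, `1 + |z|²` and `|z - y|²` are comparable because `|z - y| ≥ a`
  obtain ⟨B, hB0, hB⟩ : ∃ B : ℝ, 0 < B ∧ ∀ z : ℂ, a < z.im → ∀ y, A y ≠ 0 →
      1 + ‖z‖ ^ 2 ≤ B * ‖z - y‖ ^ 2 := by
    refine ⟨1 / a ^ 2 + (1 + L / a) ^ 2, by positivity, fun z hz y hy => ?_⟩
    have h1 := sub_ofReal_bound hz y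
    have h2 : ‖z‖ ≤ (1 + L / a) * ‖z - y‖ := by
      have h3 : ‖z‖ ≤ ‖z - y‖ + ‖(y : ℂ)‖ := by
        simpa using norm_add_le (z - y) (y : ℂ)
      rw [Complex.norm_real, Real.norm_eq_abs] at h3
      have h4 : L ≤ L / a * ‖z - y‖ := by
        rw [div_mul_eq_mul_div, le_div_iff₀ ha]
        gcongr
      linarith [hL y hy]
    have h5 : ‖z‖ ^ 2 ≤ (1 + L / a) ^ 2 * ‖z - y‖ ^ 2 := by
      rw [← mul_pow]; gcongr
    have h6 : 1 ≤ 1 / a ^ 2 * ‖z - y‖ ^ 2 := by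
      rw [div_mul_eq_mul_div, one_mul, one_le_div (by positivity)]; gcongr
    linarith
  have bd : ∀ n : ℕ, ∀ z : ℂ, a < z.im →
      ‖cauchyPow A (n + 2) z‖ ≤ (a ^ n)⁻¹ * B * (∫ y, |A y|) / (1 + ‖z‖ ^ 2) := by
    intro n z hz
    have hle : ‖cauchyPow A (n + 2) z‖ ≤
        ∫ y, (a ^ n)⁻¹ * B / (1 + ‖z‖ ^ 2) * |A y| := by
      refine norm_integral_le_of_norm_le (iA.abs.const_mul _) (.of_forall fun y => ?_)
      by_cases hy : A y = 0
      · simp [hy]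
      have h1 := sub_ofReal_bound hz y
      have h0 : 0 < ‖z - y‖ := ha.trans h1
      rw [norm_mul, norm_inv, norm_pow, Complex.norm_real, Real.norm_eq_abs, mul_comm]
      refine mul_le_mul_of_nonneg_right ?_ (abs_nonneg _)
      rw [pow_add, mul_inv, mul_div_assoc]
      have h2 := hB z hz y hy
      have h3 : (‖z - y‖ ^ 2)⁻¹ ≤ B / (1 + ‖z‖ ^ 2) := by
        rw [inv_eq_one_div, div_le_div_iff₀ (by positivity) (by positivity)]
        linarith
      gcongr
    rw [integral_const_mul] at hle
    exact hle.trans_eq (by ring)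
  have hI : 0 ≤ ∫ y, |A y| := integral_nonneg fun _ => abs_nonneg _
  set T := ∫ y, |A y|
  have bd' : ∀ n : ℕ, ∀ d : ℂ, ‖d‖ ≤ 12 → n ≤ 3 → ∀ z : ℂ, a < z.im →
      ‖c * (d * cauchyPow A (n + 2) z)‖ ≤
        ‖c‖ * (12 * ((1 + a⁻¹) ^ 3 * B * T)) / (1 + ‖z‖ ^ 2) := by
    intro n d hd hn z hz
    have h1 : (a ^ n)⁻¹ ≤ (1 + a⁻¹) ^ 3 := by
      rw [← inv_pow]
      have : 0 < a⁻¹ := by positivity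
      calc a⁻¹ ^ n ≤ (1 + a⁻¹) ^ n := by gcongr; linarith
        _ ≤ _ := pow_le_pow_right₀ (by linarith) hn
    rw [norm_mul, norm_mul, mul_div_assoc, mul_div_assoc]
    have h2 := (bd n z hz).trans (by gcongr :
      (a ^ n)⁻¹ * B * T / (1 + ‖z‖ ^ 2) ≤ (1 + a⁻¹) ^ 3 * B * T / (1 + ‖z‖ ^ 2))
    gcongr
  refine ⟨_, fun z hz => ?_, fun z hz => ?_, fun z hz => ?_, fun z hz => ?_,
    bd' 2 (-3) (by norm_num) (by norm_num), bd' 3 12 (by norm_num) (by norm_num)⟩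
  · exact ((hasDerivAt_cauchyPow hA hc 3 (ha.trans hz)).const_mul c).congr_deriv (by norm_num)
  · refine (((hasDerivAt_cauchyPow hA hc 4 (ha.trans hz)).const_mul (-3)).const_mul c).congr_deriv
      ?_
    push_cast
    ring
  · exact (((hasDerivAt_cauchyPow hA hc 5 (ha.trans hz)).const_mul 12).const_mul c).continuousAt
  · have := bd' 1 1 (by norm_num) (by norm_num) z hz
    rwa [one_mul] at this

/-- The identity `2 t² / (u + i t)³ = φ_t u - 2 i ψ_t u` at `u = x - y`, multiplied by `b`. -/
theorem kernel_identity {t : ℝ} (ht : 0 < t) (x y b : ℝ) :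
    (2 * t ^ 2 : ℂ) * ((b : ℂ) * ((pt x t - y) ^ 3)⁻¹) =
      ⟨2 * t ^ 2 * (x - y) * ((x - y) ^ 2 - 3 * t ^ 2) / ((x - y) ^ 2 + t ^ 2) ^ 3 * b,
        -2 * (t ^ 3 * (3 * (x - y) ^ 2 - t ^ 2) / ((x - y) ^ 2 + t ^ 2) ^ 3 * b)⟩ := by
  have hw : (pt x t - y) = ((x - y : ℝ) : ℂ) + t * Complex.I := by
    apply Complex.ext <;> simp [pt]
  have hpos : 0 < (x - y) ^ 2 + t ^ 2 := by positivity
  generalize x - y = u at *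
  have hQ : ((u : ℂ) ^ 2 + (t : ℂ) ^ 2) ≠ 0 := by exact_mod_cast hpos.ne'
  have hinv : ((u : ℂ) + t * Complex.I)⁻¹ = (u - t * Complex.I) / ((u : ℂ) ^ 2 + (t : ℂ) ^ 2) := by
    refine inv_eq_of_mul_eq_one_right ?_
    rw [mul_div_assoc', div_eq_one_iff_eq hQ]
    linear_combination -(t : ℂ) ^ 2 * Complex.I_sq
  have hcube : ((u : ℂ) - t * Complex.I) ^ 3 =
      (u ^ 3 - 3 * u * t ^ 2) + (t ^ 3 - 3 * u ^ 2 * t) * Complex.I := by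
    linear_combination (3 * (u : ℂ) * t ^ 2 - t ^ 3 * Complex.I) * Complex.I_sq
  rw [hw, ← inv_pow, hinv, div_pow, hcube, ← mul_assoc]
  rw [Complex.mk_eq_add_mul_I]
  push_cast
  field_simp
  ring

theorem riesz_kernels {p C : ℝ} (hp : 1 < p) (hR : RieszBound p C) {t : ℝ} (ht : 0 < t)
    {A : ℝ → ℝ} (hA : Continuous A) (hc : HasCompactSupport A) :
    Integrable (fun x : ℝ => |∫ y : ℝ, 2 * t ^ 2 * (x - y) * ((x - y) ^ 2 - 3 * t ^ 2) /
        ((x - y) ^ 2 + t ^ 2) ^ 3 * A y| ^ p) ∧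
    Integrable (fun x : ℝ => |∫ y : ℝ, t ^ 3 * (3 * (x - y) ^ 2 - t ^ 2) /
        ((x - y) ^ 2 + t ^ 2) ^ 3 * A y| ^ p) ∧
    ∫ x : ℝ, |∫ y : ℝ, 2 * t ^ 2 * (x - y) * ((x - y) ^ 2 - 3 * t ^ 2) /
        ((x - y) ^ 2 + t ^ 2) ^ 3 * A y| ^ p ≤
      C * 2 ^ p * ∫ x : ℝ, |∫ y : ℝ, t ^ 3 * (3 * (x - y) ^ 2 - t ^ 2) /
        ((x - y) ^ 2 + t ^ 2) ^ 3 * A y| ^ p := by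
  obtain ⟨M, H⟩ := exists_hpd hA hc (half_pos ht) (2 * t ^ 2)
  have htt : t / 2 < t := half_lt_self ht
  have hint : ∀ x, Integrable fun y : ℝ => (2 * t ^ 2 : ℂ) * ((A y : ℂ) * ((pt x t - y) ^ 3)⁻¹) :=
    fun x => (integrable_cauchyPow hA hc 3 (z := pt x t) ht).const_mul _
  have hF : ∀ x, (2 * t ^ 2 : ℂ) * cauchyPow A 3 (pt x t) =
      ∫ y : ℝ, (2 * t ^ 2 : ℂ) * ((A y : ℂ) * ((pt x t - y) ^ 3)⁻¹) := fun x =>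
    (integral_const_mul _ _).symm
  have hre : ∀ x, ∫ y : ℝ, 2 * t ^ 2 * (x - y) * ((x - y) ^ 2 - 3 * t ^ 2) /
        ((x - y) ^ 2 + t ^ 2) ^ 3 * A y = ((2 * t ^ 2 : ℂ) * cauchyPow A 3 (pt x t)).re := by
    intro x
    rw [hF]
    refine Eq.trans ?_ (integral_re (𝕜 := ℂ) (hint x))
    exact integral_congr_ae (.of_forall fun y => by simp only [kernel_identity ht]; rfl)
  have him : ∀ x, -2 * ∫ y : ℝ, t ^ 3 * (3 * (x - y) ^ 2 - t ^ 2) /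
        ((x - y) ^ 2 + t ^ 2) ^ 3 * A y = ((2 * t ^ 2 : ℂ) * cauchyPow A 3 (pt x t)).im := by
    intro x
    rw [hF, ← integral_const_mul]
    refine Eq.trans ?_ (integral_im (𝕜 := ℂ) (hint x))
    exact integral_congr_ae (.of_forall fun y => by simp only [kernel_identity ht]; rfl)
  have him' : ∀ x, |((2 * t ^ 2 : ℂ) * cauchyPow A 3 (pt x t)).im| ^ p =
      2 ^ p * |∫ y : ℝ, t ^ 3 * (3 * (x - y) ^ 2 - t ^ 2) /
        ((x - y) ^ 2 + t ^ 2) ^ 3 * A y| ^ p := by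
    intro x
    rw [← him, abs_mul, abs_neg, abs_two, Real.mul_rpow two_pos.le (abs_nonneg _)]
  have h2 : (0 : ℝ) < 2 ^ p := by positivity
  refine ⟨?_, ?_, ?_⟩
  · simp only [hre]
    exact H.integrable_of_le htt hp.le (Complex.continuous_re.comp (H.continuous htt))
      fun x => Complex.abs_re_le_norm _
  · have := H.integrable_of_le htt hp.le (Complex.continuous_im.comp (H.continuous htt))
      fun x => Complex.abs_im_le_norm _
    simp only [Function.comp, him'] at this
    exact (integrable_const_mul_iff (isUnit_iff_ne_zero.2 h2.ne') _).1 this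
  · have := hR _ _ _ _ _ H t htt
    simp only [him', ← hre, integral_const_mul] at this
    rwa [mul_assoc]

open MeasureTheory

theorem statement18 (p : ℝ) (hp : 1 < p) :
    ∃ C : ℝ, 0 < C ∧
      ∀ t : ℝ, 0 < t → ∀ A : ℝ → ℝ, ∀ K : NNReal, LipschitzWith K A →
        HasCompactSupport A →
          (∫⁻ x : ℝ,
              ENNReal.ofReal
                (|∫ y : ℝ,
                    2 * t ^ 2 * (x - y) * ((x - y) ^ 2 - 3 * t ^ 2) /
                      ((x - y) ^ 2 + t ^ 2) ^ 3 * A y| ^ p)) ^ (1 / p) ≤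
            ENNReal.ofReal C *
              (∫⁻ x : ℝ,
                  ENNReal.ofReal
                    (|∫ y : ℝ,
                        t ^ 3 * (3 * (x - y) ^ 2 - t ^ 2) / ((x - y) ^ 2 + t ^ 2) ^ 3 *
                          A y| ^ p)) ^ (1 / p) := by
  obtain ⟨C, hC, hR⟩ := exists_rieszBound hp
  have hp0 : 0 < p := by linarith
  refine ⟨(C * 2 ^ p) ^ (1 / p), by positivity, ?_⟩
  intro t ht A K hA hc
  obtain ⟨i1, i2, hle⟩ := riesz_kernels hp hR ht hA.continuous hc
  rw [← ofReal_integral_eq_lintegral_ofReal i1 (.of_forall fun _ => by positivity),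
    ← ofReal_integral_eq_lintegral_ofReal i2 (.of_forall fun _ => by positivity),
    ← ENNReal.ofReal_rpow_of_pos (by positivity),
    ← ENNReal.mul_rpow_of_nonneg _ _ (by positivity), ← ENNReal.ofReal_mul (by positivity)]
  exact ENNReal.rpow_le_rpow (ENNReal.ofReal_le_ofReal hle) (by positivity)
end
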